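/- Let (X, d, T) be a topological dynamical system. Then for every δ ∈ (0,1), the lower metric mean dimension satisfies mdim̲_M(X,d,T) = liminf_{ε→0} (1/log(1/ε)) · sup_{μ ∈ E_T(X)} h̲_μ^K(ε, δ), where h̲_μ^K denotes the lower Katok entropy. -/

import Mathlib

open Filter MeasureTheory Set Topology

variable {X : Type*}

/-- The dynamical (Bowen) metric `d_n(x,y) = max_{0 ≤ k ≤ n-1} d(T^k x, T^k y)`. -/
noncomputable def dynDist [MetricSpace X] (T : X → X) (n : ℕ) (x y : X) : ℝ :=
  ⨆ k ∈ Finset.range n, dist (T^[k] x) (T^[k] y)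

/-- The open dynamical ball `B_n(x, ε) = {y : d_n(x,y) < ε}`. -/
def dynBall [MetricSpace X] (T : X → X) (n : ℕ) (x : X) (ε : ℝ) : Set X :=
  {y | dynDist T n x y < ε}

/-- `s_n(K, ε)`: the maximal cardinality of an `(n,ε)`-separated subset of `K`. -/
noncomputable def sepNum [MetricSpace X] (T : X → X) (n : ℕ) (K : Set X) (ε : ℝ) : ℕ :=
  sSup {m | ∃ E : Finset X, ↑E ⊆ K ∧
    (∀ x ∈ E, ∀ y ∈ E, x ≠ y → ε < dynDist T n x y) ∧ E.card = m}

/-- `S(K, ε) = limsup_n (1/n) log s_n(K, ε)`. -/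
noncomputable def sepEnt [MetricSpace X] (T : X → X) (K : Set X) (ε : ℝ) : EReal :=
  limsup (fun n : ℕ => ((Real.log (sepNum T n K ε) / n : ℝ) : EReal)) atTop

/-- `r_n(K, ε)`: the minimal cardinality of an `(n,ε)`-spanning set for `K`. -/
noncomputable def spanNum [MetricSpace X] (T : X → X) (n : ℕ) (K : Set X) (ε : ℝ) : ℕ :=
  sInf {m | ∃ F : Finset X, (∀ x ∈ K, ∃ y ∈ F, dynDist T n x y ≤ ε) ∧ F.card = m}

/-- `R(K, ε) = limsup_n (1/n) log r_n(K, ε)`. -/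
noncomputable def spanEnt [MetricSpace X] (T : X → X) (K : Set X) (ε : ℝ) : EReal :=
  limsup (fun n : ℕ => ((Real.log (spanNum T n K ε) / n : ℝ) : EReal)) atTop

/-- Upper metric mean dimension. -/
noncomputable def mdimUpper [MetricSpace X] (T : X → X) : EReal :=
  limsup (fun ε : ℝ => sepEnt T univ ε / ((Real.log (1 / ε) : ℝ) : EReal)) (𝓝[>] (0:ℝ))

/-- Lower metric mean dimension. -/
noncomputable def mdimLower [MetricSpace X] (T : X → X) : EReal :=
  liminf (fun ε : ℝ => sepEnt T univ ε / ((Real.log (1 / ε) : ℝ) : EReal)) (𝓝[>] (0:ℝ))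

/-- The ergodic `T`-invariant Borel probability measures. -/
def ergodicMeasures [MeasurableSpace X] (T : X → X) : Set (Measure X) :=
  {μ | IsProbabilityMeasure μ ∧ Ergodic T μ}

/-- `U` is a finite open cover of `X`. -/
def IsFiniteOpenCover [TopologicalSpace X] (U : Finset (Set X)) : Prop :=
  (∀ V ∈ U, IsOpen V) ∧ ⋃₀ (U : Set (Set X)) = univ

/-- The cover `U^n = ⋁_{i=0}^{n-1} T^{-i} U`. -/
def dynRefine (T : X → X) (U : Finset (Set X)) (n : ℕ) : Set (Set X) :=
  {V | ∃ f : Fin n → Set X, (∀ i, f i ∈ U) ∧ V = ⋂ i : Fin n, T^[(i : ℕ)] ⁻¹' f i}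

/-- `N(C)`: the minimal cardinality of a subcover of `C`. -/
noncomputable def coverNum (C : Set (Set X)) : ℕ :=
  sInf {m | ∃ F : Finset (Set X), ↑F ⊆ C ∧ ⋃₀ (F : Set (Set X)) = univ ∧ F.card = m}

/-- `N_μ(U^n, δ)`: minimal number of members of `U^n` needed to cover a set of measure ≥ δ. -/
noncomputable def shapiraNum [MeasurableSpace X] (T : X → X) (μ : Measure X)
    (U : Finset (Set X)) (n : ℕ) (δ : ℝ) : ℕ :=
  sInf {m | ∃ F : Finset (Set X), ↑F ⊆ dynRefine T U n ∧
    ENNReal.ofReal δ ≤ μ (⋃₀ (F : Set (Set X))) ∧ F.card = m}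

/-- Shapira's entropy `h_μ^S(U, δ) = limsup_n (1/n) log N_μ(U^n, δ)`. -/
noncomputable def shapiraEnt [MeasurableSpace X] (T : X → X) (μ : Measure X)
    (U : Finset (Set X)) (δ : ℝ) : EReal :=
  limsup (fun n : ℕ => ((Real.log (shapiraNum T μ U n δ) / n : ℝ) : EReal)) atTop

/-- `N_μ^δ(n, ε)`: smallest number of open `(n,ε)`-dynamical balls whose union has
measure `> δ`. -/
noncomputable def katokNum [MetricSpace X] [MeasurableSpace X] (T : X → X) (μ : Measure X)
    (n : ℕ) (ε δ : ℝ) : ℕ :=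
  sInf {m | ∃ F : Finset X, ENNReal.ofReal δ < μ (⋃ x ∈ F, dynBall T n x ε) ∧ F.card = m}

/-- Katok's entropy `h_μ^K(ε, δ) = limsup_n (1/n) log N_μ^δ(n, ε)`. -/
noncomputable def katokEnt [MetricSpace X] [MeasurableSpace X] (T : X → X) (μ : Measure X)
    (ε δ : ℝ) : EReal :=
  limsup (fun n : ℕ => ((Real.log (katokNum T μ n ε δ) / n : ℝ) : EReal)) atTop

/-- Lower Katok entropy `h̲_μ^K(ε, δ) = liminf_n (1/n) log N_μ^δ(n, ε)`. -/
noncomputable def katokEntLower [MetricSpace X] [MeasurableSpace X] (T : X → X) (μ : Measure X)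
    (ε δ : ℝ) : EReal :=
  liminf (fun n : ℕ => ((Real.log (katokNum T μ n ε δ) / n : ℝ) : EReal)) atTop

/-- `Ñ_μ^δ(n, ε)`: smallest number of sets of `d_n`-diameter ≤ ε whose union has
measure `> δ`. -/
noncomputable def katokNumTilde [MetricSpace X] [MeasurableSpace X] (T : X → X) (μ : Measure X)
    (n : ℕ) (ε δ : ℝ) : ℕ :=
  sInf {m | ∃ F : Finset (Set X), (∀ A ∈ F, ∀ x ∈ A, ∀ y ∈ A, dynDist T n x y ≤ ε) ∧
    ENNReal.ofReal δ < μ (⋃₀ (F : Set (Set X))) ∧ F.card = m}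

/-- Brin–Katok local entropy `h_μ^{BK}(x, ε) = limsup_n -(1/n) log μ(B_n(x, ε))`. -/
noncomputable def brinKatok [MetricSpace X] [MeasurableSpace X] (T : X → X) (μ : Measure X)
    (x : X) (ε : ℝ) : EReal :=
  limsup (fun n : ℕ => -(ENNReal.log (μ (dynBall T n x ε))) / (n : EReal)) atTop

/-- Lower Brin–Katok local entropy `h̲_μ^{BK}(x, ε) = liminf_n -(1/n) log μ(B_n(x, ε))`. -/
noncomputable def brinKatokLower [MetricSpace X] [MeasurableSpace X] (T : X → X) (μ : Measure X)
    (x : X) (ε : ℝ) : EReal :=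
  liminf (fun n : ℕ => -(ENNReal.log (μ (dynBall T n x ε))) / (n : EReal)) atTop

/-- Local entropy function `h_d(x, ε) = inf { S(K, ε) : K closed neighborhood of x }`. -/
noncomputable def locEnt [MetricSpace X] (T : X → X) (x : X) (ε : ℝ) : EReal :=
  ⨅ K ∈ {K : Set X | IsClosed K ∧ K ∈ 𝓝 x}, sepEnt T K ε

/-- Local spanning entropy `h̃_d(x, ε) = inf { R(K, ε) : K closed neighborhood of x }`. -/
noncomputable def locSpanEnt [MetricSpace X] (T : X → X) (x : X) (ε : ℝ) : EReal :=
  ⨅ K ∈ {K : Set X | IsClosed K ∧ K ∈ 𝓝 x}, spanEnt T K ε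

/-- `U_x^n`: the union of all cells of `U^n` containing `x`. -/
def dynCoverCell (T : X → X) (U : Finset (Set X)) (n : ℕ) (x : X) : Set X :=
  ⋃₀ {V | V ∈ dynRefine T U n ∧ x ∈ V}

/-!
A maximal `(n, ε)`-separated set is `(n, ε)`-spanning, so the Katok entropies at scale `2 ε` are at
most `S(X, ε)`; conversely `S(X, 4 ε)` is at most their supremum over the ergodic measures at
scale `ε`. Constant factors in `ε` disappear after division by `log (1 / ε)`.

For the converse, code orbits by words in a finite cover by balls of radius `2 ε`. If the Katok
entropy of an ergodic `μ` is below `a`, then for infinitely many `m` some `exp (a m)` words of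
length `m` follow, without a mismatch, the orbits of a set of measure above `δ`. Splicing these
words into the orbits of typical points wherever they are available lowers the attainable
proportion of mismatches from `θ` to `(1 - δ) θ`, at no cost in rate by Kraft's inequality;
iterating, `exp (a L)` words of each large length `L` follow almost all orbits with a vanishing
proportion of mismatches. The ergodic decomposition extends this to all invariant measures. By
compactness of the set of invariant measures, finitely many codes suffice for all orbits
uniformly, and the remaining mismatches are removed by passing to Hamming balls of subexponential
cardinality. Words without mismatches bound the size of `(L, 4 ε)`-separated sets.
-/

section Words

variable {ι : Type*} {T : X → X} {U : ι → Set X}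

open Classical in
/-- The number of positions `k` at which the orbit `x, T x, T² x, …` lies outside the set `U dₖ`
prescribed by the word `[d₀, d₁, …]`: the Hamming distance from the word to the itineraries
of `x`. -/
noncomputable def mismatches (T : X → X) (U : ι → Set X) : X → List ι → ℕ
  | _, [] => 0
  | x, d :: l => (if x ∈ U d then 0 else 1) + mismatches T U (T x) l

lemma mismatches_append (x : X) (l l' : List ι) :
    mismatches T U x (l ++ l') = mismatches T U x l + mismatches T U (T^[l.length] x) l' := by
  induction l generalizing x with
  | nil => simp [mismatches]
  | cons d l ih => simp only [List.cons_append, mismatches, ih, List.length_cons,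
      Function.iterate_succ_apply, add_assoc]

lemma mismatches_le_length (x : X) (l : List ι) : mismatches T U x l ≤ l.length := by
  induction l generalizing x with
  | nil => exact le_rfl
  | cons d l ih =>
    have := ih (T x)
    simp only [mismatches, List.length_cons]
    split_ifs <;> omega

lemma mismatches_replicate_append_le (x : X) (d : ι) (s : ℕ) (l : List ι) :
    mismatches T U x (List.replicate s d ++ l) ≤ s + mismatches T U (T^[s] x) l := by
  rw [mismatches_append, List.length_replicate]
  exact Nat.add_le_add_right ((mismatches_le_length _ _).trans_eq List.length_replicate) _

lemma mismatches_eq_zero_iff {x : X} {l : List ι} :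
    mismatches T U x l = 0 ↔ ∀ (k : ℕ) (hk : k < l.length), T^[k] x ∈ U l[k] := by
  induction l generalizing x with
  | nil => simp [mismatches]
  | cons d l ih =>
    simp only [mismatches, Nat.add_eq_zero_iff, ih, ite_eq_left_iff, one_ne_zero, imp_false,
      not_not]
    refine ⟨fun ⟨hd, hl⟩ k hk => ?_, fun h => ⟨h 0 (Nat.succ_pos _), fun k hk =>
      h (k + 1) (Nat.succ_lt_succ hk)⟩⟩
    cases k with
    | zero => exact hd
    | succ k => exact hl k (Nat.lt_of_succ_lt_succ hk)

lemma eventually_mismatches_le [TopologicalSpace X] (hT : Continuous T) (hU : ∀ d, IsOpen (U d))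
    (l : List ι) (x : X) : ∀ᶠ y in 𝓝 x, mismatches T U y l ≤ mismatches T U x l := by
  induction l generalizing x with
  | nil => exact Eventually.of_forall fun _ => le_rfl
  | cons d l ih =>
    by_cases hx : x ∈ U d
    · filter_upwards [hT.continuousAt.eventually (ih (T x)), (hU d).mem_nhds hx] with y hy hyd
      simpa only [mismatches, hx, hyd, if_true, zero_add] using hy
    · filter_upwards [hT.continuousAt.eventually (ih (T x))] with y hy
      simp only [mismatches, hx, if_false]
      split_ifs <;> omega

/-- The points whose orbit follows some word of `E` with at most `c` mismatches. -/
def shadowed (T : X → X) (U : ι → Set X) (E : Finset (List ι)) (c : ℝ) : Set X :=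
  {x | ∃ l ∈ E, (mismatches T U x l : ℝ) ≤ c}

lemma isOpen_shadowed [TopologicalSpace X] (hT : Continuous T) (hU : ∀ d, IsOpen (U d))
    (E : Finset (List ι)) (c : ℝ) : IsOpen (shadowed T U E c) := by
  refine isOpen_iff_eventually.2 fun x ⟨l, hl, hx⟩ => ?_
  filter_upwards [eventually_mismatches_le hT hU l x] with y hy
  exact ⟨l, hl, (Nat.cast_le.2 hy).trans hx⟩

end Words

section Visits

variable {T : X → X} {S : Set X}

/-- The number of visits of the orbit segment `x, T x, …, T^(n-1) x` to `S`, as a real number. -/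
noncomputable def visits (T : X → X) (S : Set X) (n : ℕ) (x : X) : ℝ :=
  birkhoffSum T (S.indicator 1) n x

lemma indicator_one_nonneg (S : Set X) (x : X) : (0 : ℝ) ≤ S.indicator 1 x :=
  indicator_nonneg (fun _ _ => zero_le_one) x

lemma norm_indicator_one_le (S : Set X) (x : X) : ‖S.indicator (1 : X → ℝ) x‖ ≤ 1 :=
  (norm_indicator_le_norm_self _ x).trans (by simp)

lemma visits_nonneg (n : ℕ) (x : X) : 0 ≤ visits T S n x := by
  rw [visits, birkhoffSum]
  exact Finset.sum_nonneg fun k _ => indicator_one_nonneg S (T^[k] x)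

lemma visits_add_visits_compl (n : ℕ) (x : X) : visits T S n x + visits T Sᶜ n x = n := by
  rw [visits, visits, ← birkhoffSum_add', indicator_self_add_compl]
  simp [birkhoffSum]

lemma visits_le (n : ℕ) (x : X) : visits T S n x ≤ n := by
  linarith [visits_add_visits_compl (T := T) (S := S) n x, visits_nonneg (T := T) (S := Sᶜ) n x]

lemma visits_eq_of_forall_mem {n : ℕ} {x : X} (h : ∀ s < n, T^[s] x ∈ S) : visits T S n x = n := by
  rw [visits, birkhoffSum, Finset.sum_congr rfl fun s hs =>
    indicator_of_mem (h s (Finset.mem_range.1 hs)) 1]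
  simp

lemma birkhoffAverage_indicator_one (n : ℕ) (x : X) :
    birkhoffAverage ℝ T (S.indicator 1) n x = visits T S n x / n := by
  rw [birkhoffAverage, visits, smul_eq_mul, div_eq_inv_mul]

end Visits

section Parsings

variable {ι : Type*} {D : Finset (List ι)} {d : ι}

open Classical in
/-- The words of length `L` that are concatenations of nonempty words of the dictionary `D`. -/
noncomputable def parsings (D : Finset (List ι)) : ℕ → Finset (List ι)
  | 0 => {[]}
  | L + 1 => D.biUnion fun w =>
      if _ : 0 < w.length ∧ w.length ≤ L + 1 then
        (parsings D (L + 1 - w.length)).image (w ++ ·)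
      else ∅

lemma mem_parsings_succ {L : ℕ} {l : List ι} :
    l ∈ parsings D (L + 1) ↔ ∃ w ∈ D, (0 < w.length ∧ w.length ≤ L + 1) ∧
      ∃ l' ∈ parsings D (L + 1 - w.length), w ++ l' = l := by
  classical
  rw [parsings, Finset.mem_biUnion]
  refine exists_congr fun w => and_congr_right fun _ => ?_
  by_cases hw : 0 < w.length ∧ w.length ≤ L + 1
  · rw [dif_pos hw, Finset.mem_image, and_iff_right hw]
  · rw [dif_neg hw]
    exact ⟨fun h => absurd h (Finset.notMem_empty l), fun h => absurd h.1 hw⟩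

lemma nil_mem_parsings : [] ∈ parsings D 0 := by
  rw [parsings, Finset.mem_singleton]

lemma word_append_mem_parsings {w l : List ι} {L : ℕ} (hw : w ∈ D) (hw0 : 0 < w.length)
    (hl : l ∈ parsings D L) : w ++ l ∈ parsings D (w.length + L) := by
  obtain ⟨k, hk⟩ : ∃ k, w.length + L = k + 1 := Nat.exists_eq_succ_of_ne_zero (by omega)
  rw [hk, mem_parsings_succ]
  exact ⟨w, hw, ⟨hw0, by omega⟩, l, by rwa [← hk, Nat.add_sub_cancel_left], rfl⟩

lemma length_of_mem_parsings {L : ℕ} {l : List ι} (hl : l ∈ parsings D L) : l.length = L := by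
  induction L using Nat.strong_induction_on generalizing l with
  | _ L ih =>
    cases L with
    | zero =>
      rw [parsings, Finset.mem_singleton] at hl
      rw [hl, List.length_nil]
    | succ L =>
      obtain ⟨w, -, ⟨hw0, hwL⟩, l', hl', rfl⟩ := mem_parsings_succ.1 hl
      rw [List.length_append, ih _ (by omega) hl']
      omega

lemma append_mem_parsings {k L : ℕ} {l l' : List ι} (hl : l ∈ parsings D k)
    (hl' : l' ∈ parsings D L) : l ++ l' ∈ parsings D (k + L) := by
  induction k using Nat.strong_induction_on generalizing l with
  | _ k ih =>
    cases k with
    | zero =>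
      rw [parsings, Finset.mem_singleton] at hl
      rwa [hl, List.nil_append, Nat.zero_add]
    | succ k =>
      obtain ⟨w, hw, ⟨hw0, hwk⟩, u, hu, rfl⟩ := mem_parsings_succ.1 hl
      have := word_append_mem_parsings hw hw0 (ih _ (by omega) hu)
      rwa [List.append_assoc, show k + 1 + L = w.length + (k + 1 - w.length + L) by omega]

lemma mem_parsings_of_mem {w : List ι} {n : ℕ} (hw : w ∈ D) (hwn : w.length = n) (hn : 0 < n) :
    w ∈ parsings D n := by
  subst hwn
  simpa using word_append_mem_parsings hw hn nil_mem_parsings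

lemma replicate_mem_parsings (hd : [d] ∈ D) (s : ℕ) : List.replicate s d ∈ parsings D s := by
  induction s with
  | zero => exact nil_mem_parsings
  | succ s ih =>
    rw [List.replicate_succ, Nat.add_comm]
    exact word_append_mem_parsings hd Nat.one_pos ih

/-- The sum `∑ exp (-b |w|)` over the words `w` of `D`, as in Kraft's inequality. -/
noncomputable def kraftSum (b : ℝ) (D : Finset (List ι)) : ℝ :=
  ∑ w ∈ D, Real.exp (-b * w.length)

lemma kraftSum_union_le [DecidableEq ι] (b : ℝ) (D D' : Finset (List ι)) :
    kraftSum b (D ∪ D') ≤ kraftSum b D + kraftSum b D' := by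
  rw [kraftSum, kraftSum, kraftSum, ← Finset.sum_union_inter]
  exact le_add_of_nonneg_right (Finset.sum_nonneg fun _ _ => (Real.exp_pos _).le)

lemma card_parsings_le {b : ℝ} (hD : kraftSum b D ≤ 1) (L : ℕ) :
    ((parsings D L).card : ℝ) ≤ Real.exp (b * L) := by
  classical
  induction L using Nat.strong_induction_on with
  | _ L ih =>
    cases L with
    | zero => simp [parsings]
    | succ L =>
      rw [parsings]
      calc _ ≤ ∑ w ∈ D, Real.exp (b * (L + 1 : ℕ)) * Real.exp (-b * w.length) := by
            refine (Nat.cast_le.2 Finset.card_biUnion_le).trans ?_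
            rw [Nat.cast_sum]
            refine Finset.sum_le_sum fun w _ => ?_
            split_ifs with hw
            · calc _ ≤ ((parsings D (L + 1 - w.length)).card : ℝ) :=
                    Nat.cast_le.2 Finset.card_image_le
                _ ≤ Real.exp (b * (L + 1 - w.length : ℕ)) := ih _ (by omega)
                _ = _ := by
                  rw [← Real.exp_add, Nat.cast_sub hw.2]
                  ring_nf
            · rw [Finset.card_empty, Nat.cast_zero]
              positivity
        _ = Real.exp (b * (L + 1 : ℕ)) * kraftSum b D := by rw [kraftSum, Finset.mul_sum]
        _ ≤ _ := mul_le_of_le_one_right (Real.exp_pos _).le hD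

/-- Greedy parsing: `ψ` is the price paid along the orbit, and the last incomplete word costs at
most `K`. -/
lemma exists_parsing_mismatches_le {T : X → X} {U : ι → Set X} {ψ : X → ℝ} (hψ : ∀ x, 0 ≤ ψ x)
    (hd : [d] ∈ D) {K : ℕ} (h : ∀ x, ∃ k, 0 < k ∧ k ≤ K ∧ ∃ w ∈ parsings D k,
      (mismatches T U x w : ℝ) ≤ birkhoffSum T ψ k x) (L : ℕ) (x : X) :
    ∃ l ∈ parsings D L, (mismatches T U x l : ℝ) ≤ birkhoffSum T ψ L x + K := by
  induction L using Nat.strong_induction_on generalizing x with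
  | _ L ih =>
    obtain ⟨k, hk0, hkK, w, hw, hwx⟩ := h x
    rcases le_or_gt k L with hkL | hkL
    · obtain ⟨j, rfl⟩ := Nat.exists_eq_add_of_le hkL
      obtain ⟨l, hl, hlx⟩ := ih j (by omega) (T^[k] x)
      refine ⟨w ++ l, append_mem_parsings hw hl, ?_⟩
      rw [mismatches_append, length_of_mem_parsings hw, Nat.cast_add, birkhoffSum_add]
      linarith
    · refine ⟨_, replicate_mem_parsings hd L, ?_⟩
      calc (mismatches T U x (List.replicate L d) : ℝ) ≤ L := by
            exact_mod_cast (mismatches_le_length (U := U) x _).trans_eq List.length_replicate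
        _ ≤ K := by exact Nat.cast_le.2 (hkL.le.trans hkK)
        _ ≤ birkhoffSum T ψ L x + K :=
            le_add_of_nonneg_left (Finset.sum_nonneg fun _ _ => hψ _)

end Parsings

section BlockCodes

variable {ι : Type*} {T : X → X} {U : ι → Set X} {E : Finset (List ι)} {n : ℕ} {a b : ℝ}

/-- `E` is a block code of length `n` and rate `a`: at most `exp (a n)` words, all of
length `n`. -/
structure IsBlockCode (E : Finset (List ι)) (n : ℕ) (a : ℝ) : Prop where
  length_eq : ∀ l ∈ E, l.length = n
  card_le : (E.card : ℝ) ≤ Real.exp (a * n)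

lemma isBlockCode_parsings {D : Finset (List ι)} (hD : kraftSum b D ≤ 1) (L : ℕ) :
    IsBlockCode (parsings D L) L b :=
  ⟨fun _ => length_of_mem_parsings, card_parsings_le hD L⟩

lemma IsBlockCode.kraftSum_le (hE : IsBlockCode E n a) (b : ℝ) :
    kraftSum b E ≤ Real.exp (-(b - a) * n) :=
  calc kraftSum b E = E.card * Real.exp (-b * n) := by
        rw [kraftSum, Finset.sum_congr rfl fun l hl => by rw [hE.length_eq l hl],
          Finset.sum_const, nsmul_eq_mul]
    _ ≤ Real.exp (a * n) * Real.exp (-b * n) :=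
        mul_le_mul_of_nonneg_right hE.card_le (Real.exp_pos _).le
    _ = Real.exp (-(b - a) * n) := by
        rw [← Real.exp_add]
        ring_nf

lemma kraftSum_insert_singleton_le [DecidableEq ι] (b : ℝ) (d : ι) (D : Finset (List ι)) :
    kraftSum b (insert [d] D) ≤ Real.exp (-b) + kraftSum b D := by
  have letter : kraftSum b {[d]} = Real.exp (-b) := by simp [kraftSum]
  rw [Finset.insert_eq, ← letter]
  exact kraftSum_union_le b {[d]} D

lemma eventually_exp_neg_mul_le {c η : ℝ} (hc : 0 < c) (hη : 0 < η) :
    ∀ᶠ n : ℕ in atTop, Real.exp (-c * n) ≤ η := by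
  have h : Tendsto (fun n : ℕ => Real.exp (-(c * n))) atTop (𝓝 0) :=
    Real.tendsto_exp_neg_atTop_nhds_zero.comp (tendsto_natCast_atTop_atTop.const_mul_atTop hc)
  simpa only [neg_mul] using h.eventually_le_const hη

lemma eventually_isBlockCode_biUnion [DecidableEq ι] {α : Type*} (J : Finset α) (hab : a < b) :
    ∀ᶠ n : ℕ in atTop, ∀ E : α → Finset (List ι), (∀ c ∈ J, IsBlockCode (E c) n a) →
      IsBlockCode (J.biUnion E) n b := by
  filter_upwards [eventually_exp_neg_mul_le (sub_pos.2 hab)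
    (one_div_pos.2 (Nat.cast_add_one_pos (α := ℝ) J.card))] with n hn E hE
  refine ⟨fun l hl => ?_, ?_⟩
  · obtain ⟨c, hc, hlc⟩ := Finset.mem_biUnion.1 hl
    exact (hE c hc).length_eq l hlc
  · have hsplit : Real.exp (a * n) = Real.exp (b * n) * Real.exp (-(b - a) * n) := by
      rw [← Real.exp_add]
      ring_nf
    calc ((J.biUnion E).card : ℝ) ≤ ∑ c ∈ J, ((E c).card : ℝ) := by
          exact_mod_cast Finset.card_biUnion_le
      _ ≤ J.card * Real.exp (a * n) := by
          rw [← nsmul_eq_mul]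
          exact Finset.sum_le_card_nsmul _ _ _ fun c hc => (hE c hc).card_le
      _ ≤ (J.card + 1) * (Real.exp (b * n) * (1 / (J.card + 1))) := by
          rw [hsplit]
          gcongr
          linarith
      _ = Real.exp (b * n) := by field_simp

end BlockCodes

section Repacking

variable {ι : Type*} {T : X → X} {U : ι → Set X} {E E' : Finset (List ι)}
  {m n : ℕ} {θ : ℝ}

lemma exists_parsing_one_scale [DecidableEq ι] (d : ι) (hn : 0 < n)
    (hE : ∀ l ∈ E, l.length = n) (hθ : 0 ≤ θ) (L : ℕ) (x : X) :
    ∃ l ∈ parsings (insert [d] E) L, (mismatches T U x l : ℝ) ≤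
      θ * L + visits T (shadowed T U E (θ * n))ᶜ L x + n := by
  set G := shadowed T U E (θ * n)
  have hψ : ∀ k y, birkhoffSum T (fun z => θ + Gᶜ.indicator 1 z) k y
      = θ * k + visits T Gᶜ k y := fun k y => by
    simp only [visits, birkhoffSum, Finset.sum_add_distrib, Finset.sum_const, Finset.card_range,
      nsmul_eq_mul, mul_comm θ]
  rw [← hψ]
  refine exists_parsing_mismatches_le (fun y => add_nonneg hθ (indicator_one_nonneg _ y))
    (Finset.mem_insert_self _ _) (fun y => ?_) L x
  by_cases hy : y ∈ G
  · obtain ⟨l, hl, hly⟩ := hy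
    refine ⟨n, hn, le_rfl, l,
      mem_parsings_of_mem (Finset.mem_insert_of_mem hl) (hE l hl) hn, ?_⟩
    rw [hψ]
    exact hly.trans (le_add_of_nonneg_right (visits_nonneg _ _))
  · refine ⟨1, one_pos, hn, [d], replicate_mem_parsings (Finset.mem_insert_self _ _) 1, ?_⟩
    rw [birkhoffSum_one, indicator_of_mem (mem_compl hy)]
    have letter : (mismatches T U y [d] : ℝ) ≤ 1 := by exact_mod_cast mismatches_le_length y [d]
    exact letter.trans (le_add_of_nonneg_left hθ)

/-- The word of length `m` is used without error as soon as it is available within the next `n`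
steps; the at most `n` letters skipped to reach it are charged to its `m` letters. -/
lemma exists_block_two_scales [DecidableEq ι] (d : ι) (hm : 0 < m) (hn : 0 < n)
    (hE : ∀ l ∈ E, l.length = m) (hE' : ∀ l ∈ E', l.length = n) (hθ : 0 ≤ θ) (x : X) :
    ∃ k, 0 < k ∧ k ≤ n + m ∧ ∃ w ∈ parsings (insert [d] (E ∪ E')) k, (mismatches T U x w : ℝ) ≤
      θ * visits T (shadowed T U E 0)ᶜ k x + visits T (shadowed T U E' (θ * n))ᶜ k x
        + n / m * k := by
  set W := shadowed T U E 0
  set G := shadowed T U E' (θ * n)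
  set D := insert [d] (E ∪ E')
  have hd : [d] ∈ D := Finset.mem_insert_self _ _
  have visits_nn : ∀ (S : Set X) k, 0 ≤ visits T S k x := fun S k => visits_nonneg k x
  by_cases hG : x ∉ G
  · refine ⟨1, one_pos, by omega, [d], replicate_mem_parsings hd 1, ?_⟩
    have letter : (mismatches T U x [d] : ℝ) ≤ visits T Gᶜ 1 x := by
      rw [visits, birkhoffSum_one, indicator_of_mem (mem_compl hG), Pi.one_apply]
      exact_mod_cast mismatches_le_length x [d]
    have := visits_nn Wᶜ 1
    exact letter.trans (by rw [add_right_comm]; exact le_add_of_nonneg_left (by positivity))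
  by_cases hW : ∃ s < n, T^[s] x ∈ W
  · obtain ⟨s, hs, w, hw, hwx⟩ := hW
    refine ⟨s + m, by omega, by omega, List.replicate s d ++ w,
      append_mem_parsings (replicate_mem_parsings hd s)
        (mem_parsings_of_mem (by simp [D, hw]) (hE w hw) hm), ?_⟩
    have skipped : (mismatches T U x (List.replicate s d ++ w) : ℝ)
        ≤ s + mismatches T U (T^[s] x) w := by
      exact_mod_cast mismatches_replicate_append_le x d s w
    calc _ ≤ (n : ℝ) := by linarith [Nat.cast_le (α := ℝ) |>.2 hs.le]
      _ ≤ n / m * (s + m : ℕ) := by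
        rw [Nat.cast_add, mul_add, div_mul_cancel₀ _ (by positivity)]
        exact le_add_of_nonneg_left (by positivity)
      _ ≤ _ := by
        have := visits_nn Wᶜ (s + m)
        have := visits_nn Gᶜ (s + m)
        exact le_add_of_nonneg_left (by positivity)
  · push Not at hW
    obtain ⟨w, hw, hwx⟩ := not_not.1 hG
    refine ⟨n, hn, by omega, w, mem_parsings_of_mem (by simp [D, hw]) (hE' w hw) hn,
      hwx.trans ?_⟩
    rw [visits_eq_of_forall_mem hW, add_assoc]
    have := visits_nn Gᶜ n
    exact le_add_of_nonneg_right (by positivity)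

lemma exists_parsing_two_scales [DecidableEq ι] (d : ι) (hm : 0 < m) (hn : 0 < n)
    (hE : ∀ l ∈ E, l.length = m) (hE' : ∀ l ∈ E', l.length = n) (hθ : 0 ≤ θ) (L : ℕ) (x : X) :
    ∃ l ∈ parsings (insert [d] (E ∪ E')) L, (mismatches T U x l : ℝ) ≤
      θ * visits T (shadowed T U E 0)ᶜ L x + visits T (shadowed T U E' (θ * n))ᶜ L x
        + n / m * L + (n + m : ℕ) := by
  set W := shadowed T U E 0
  set G := shadowed T U E' (θ * n)
  have hψ : ∀ k y, birkhoffSum T (fun z => θ * Wᶜ.indicator 1 z + Gᶜ.indicator 1 z + n / m) k y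
      = θ * visits T Wᶜ k y + visits T Gᶜ k y + n / m * k := fun k y => by
    simp only [visits, birkhoffSum, Finset.sum_add_distrib, Finset.sum_const, Finset.card_range,
      nsmul_eq_mul, Finset.mul_sum, mul_comm (n / m : ℝ)]
  rw [← hψ]
  refine exists_parsing_mismatches_le (fun y => ?_) (Finset.mem_insert_self _ _) (fun y => ?_) L x
  · have := indicator_one_nonneg Wᶜ y
    have := indicator_one_nonneg Gᶜ y
    positivity
  · simp only [hψ]
    exact exists_block_two_scales d hm hn hE hE' hθ y

/-- The threshold `n₀` depends on the rates alone: it only has to bring the Kraft sums of the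
dictionaries `{[d]} ∪ c.2` down to `1`. -/
lemma eventually_exists_isBlockCode_of_visits (d : ι) {a b e τ : ℝ} (ha : 0 ≤ a) (hab : a < b)
    (hθ : 0 ≤ θ) (hτ : θ + e < τ) :
    ∀ᶠ n₀ : ℕ in atTop, ∀ J : Finset (ℕ × Finset (List ι)),
      (∀ c ∈ J, n₀ ≤ c.1 ∧ IsBlockCode c.2 c.1 a) → ∀ᶠ L : ℕ in atTop, ∃ E, IsBlockCode E L b ∧
        ∀ x, (∃ c ∈ J, visits T (shadowed T U c.2 (θ * c.1))ᶜ L x ≤ e * L) →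
          x ∈ shadowed T U E (τ * L) := by
  classical
  obtain ⟨b', hab', hb'⟩ := exists_between hab
  have hletter : 0 < 1 - Real.exp (-b') := sub_pos.2 (Real.exp_lt_one_iff.2 (by linarith))
  filter_upwards [eventually_exp_neg_mul_le (sub_pos.2 hab') hletter, eventually_gt_atTop 0]
    with n₀ hexp hn₀ J hJ
  have kraft : ∀ c ∈ J, kraftSum b' (insert [d] c.2) ≤ 1 := fun c hc =>
    calc kraftSum b' (insert [d] c.2) ≤ Real.exp (-b') + Real.exp (-(b' - a) * c.1) :=
          (kraftSum_insert_singleton_le _ _ _).trans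
            (add_le_add_right ((hJ c hc).2.kraftSum_le b') _)
      _ ≤ Real.exp (-b') + Real.exp (-(b' - a) * n₀) := by
          gcongr 1
          exact Real.exp_le_exp.2 (mul_le_mul_of_nonpos_left
            (Nat.cast_le.2 (hJ c hc).1) (by linarith))
      _ ≤ 1 := by linarith
  obtain ⟨K, hK⟩ : ∃ K : ℕ, ∀ c ∈ J, c.1 ≤ K :=
    ⟨J.sup Prod.fst, fun c hc => Finset.le_sup (f := Prod.fst) hc⟩
  filter_upwards [eventually_isBlockCode_biUnion (ι := ι) J hb',
    tendsto_natCast_atTop_atTop.eventually_ge_atTop (K / (τ - θ - e))] with L hcard hL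
  rw [div_le_iff₀ (by linarith)] at hL
  refine ⟨J.biUnion fun c => parsings (insert [d] c.2) L,
    hcard _ fun c hc => isBlockCode_parsings (kraft c hc) L, fun x ⟨c, hc, hx⟩ => ?_⟩
  obtain ⟨l, hl, hlx⟩ := exists_parsing_one_scale (T := T) (U := U) d (hn₀.trans_le (hJ c hc).1)
    (hJ c hc).2.length_eq hθ L x
  have : (c.1 : ℝ) ≤ K := Nat.cast_le.2 (hK c hc)
  exact ⟨l, Finset.mem_biUnion.2 ⟨c, hc, hl⟩, hlx.trans (by linarith)⟩

end Repacking

section MeanErgodic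

variable [MeasurableSpace X] {T : X → X} {μ : Measure X} {S : Set X}

lemma measurable_birkhoffSum (hT : Measurable T) {f : X → ℝ} (hf : Measurable f) (n : ℕ) :
    Measurable (birkhoffSum T f n) :=
  Finset.measurable_fun_sum _ fun k _ => hf.comp (hT.iterate k)

lemma integral_birkhoffSum (hT : MeasurePreserving T μ μ) {f : X → ℝ} (hf : Integrable f μ)
    (n : ℕ) : ∫ x, birkhoffSum T f n x ∂μ = n * ∫ x, f x ∂μ := by
  have hiter : ∀ k, ∫ x, f (T^[k] x) ∂μ = ∫ x, f x ∂μ := fun k => by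
    have hmap := (hT.iterate k).map_eq
    have hfm : AEStronglyMeasurable f (μ.map T^[k]) := hmap.symm ▸ hf.aestronglyMeasurable
    rw [← integral_map (hT.iterate k).aemeasurable hfm, hmap]
  simp only [birkhoffSum]
  rw [integral_finsetSum (f := fun k x => f (T^[k] x)) _ fun k _ =>
    (hT.iterate k).integrable_comp_of_integrable hf]
  simp [hiter]

lemma measurable_visits (hT : Measurable T) (hS : MeasurableSet S) (n : ℕ) :
    Measurable (visits T S n) :=
  measurable_birkhoffSum hT (measurable_one.indicator hS) n

lemma integral_visits [IsFiniteMeasure μ] (hT : MeasurePreserving T μ μ) (hS : MeasurableSet S)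
    (n : ℕ) : ∫ x, visits T S n x ∂μ = n * μ.real S := by
  rw [← integral_indicator_one hS]
  exact integral_birkhoffSum hT ((integrable_const (1 : ℝ)).indicator hS) n

lemma measureReal_le_visits_le [IsFiniteMeasure μ] (hT : MeasurePreserving T μ μ)
    (hS : MeasurableSet S) {c : ℝ} (hc : 0 < c) {n : ℕ} (hn : 0 < n) :
    μ.real {x | c * n ≤ visits T S n x} ≤ μ.real S / c := by
  have hint : Integrable (visits T S n) μ :=
    .of_bound (measurable_visits hT.measurable hS n).aestronglyMeasurable n <|
      ae_of_all _ fun x => by rw [Real.norm_of_nonneg (visits_nonneg n x)]; exact visits_le n x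
  have markov := mul_meas_ge_le_integral_of_nonneg (ae_of_all μ fun x => visits_nonneg n x) hint
    (c * n)
  rw [integral_visits hT hS] at markov
  rw [le_div_iff₀ hc]
  refine le_of_mul_le_mul_left (markov.trans_eq' ?_) (Nat.cast_pos (α := ℝ).2 hn)
  ring

lemma exists_tendstoInMeasure_birkhoffAverage (hT : MeasurePreserving T μ μ) {f : X → ℝ}
    (hf : MemLp f 2 μ) : ∃ g : X → ℝ, AEStronglyMeasurable g μ ∧ g ∘ T =ᵐ[μ] g ∧
      TendstoInMeasure μ (birkhoffAverage ℝ T f) atTop g := by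
  set K : Lp ℝ 2 μ →L[ℝ] Lp ℝ 2 μ :=
    (Lp.compMeasurePreservingₗᵢ ℝ T hT).toContinuousLinearMap
  have hlim := K.tendsto_birkhoffAverage_orthogonalProjection
    (LinearIsometry.norm_toContinuousLinearMap_le _) (hf.toLp f)
  set g := (K.eqLocus (1 : Lp ℝ 2 μ →L[ℝ] Lp ℝ 2 μ)).orthogonalProjectionOnto (hf.toLp f)
  have hg : Lp.compMeasurePreserving T hT g.1 = g.1 := g.2
  refine ⟨g.1, Lp.aestronglyMeasurable g.1, ?_, ?_⟩
  · have hcomp := Lp.coeFn_compMeasurePreserving g.1 hT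
    rw [hg] at hcomp
    exact hcomp.symm
  · have hiter : ∀ t : ℕ, (K^[t] (hf.toLp f) : X → ℝ) =ᵐ[μ] f ∘ T^[t] := fun t => by
      have hK : K^[t] (hf.toLp f) = Lp.compMeasurePreserving T^[t] (hT.iterate t) (hf.toLp f) :=
        congrFun (Lp.compMeasurePreserving_iterate hT t) (hf.toLp f)
      rw [hK]
      exact (Lp.coeFn_compMeasurePreserving _ (hT.iterate t)).trans
        ((hT.iterate t).quasiMeasurePreserving.ae_eq_comp hf.coeFn_toLp)
    refine (tendstoInMeasure_of_tendsto_Lp hlim).congr_left fun n => ?_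
    filter_upwards [ae_all_iff.2 hiter,
      Lp.coeFn_finsetSum (Finset.range n) fun t => K^[t] (hf.toLp f),
      Lp.coeFn_smul (n : ℝ)⁻¹ (∑ t ∈ Finset.range n, K^[t] (hf.toLp f))] with x hx hsum hsmul
    simp only [birkhoffAverage, birkhoffSum, id]
    rw [hsmul, Pi.smul_apply, hsum, Finset.sum_apply, Finset.sum_congr rfl fun t _ => hx t]
    rfl

lemma integral_eq_of_tendsto_birkhoffAverage [IsFiniteMeasure μ] (hT : MeasurePreserving T μ μ)
    {f g : X → ℝ} {C : ℝ} (hf : Measurable f) (hfC : ∀ x, ‖f x‖ ≤ C) {ns : ℕ → ℕ}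
    (hns : Tendsto ns atTop atTop)
    (h : ∀ᵐ x ∂μ, Tendsto (fun k => birkhoffAverage ℝ T f (ns k) x) atTop (𝓝 (g x))) :
    ∫ x, f x ∂μ = ∫ x, g x ∂μ := by
  have hbound : ∀ n x, ‖birkhoffAverage ℝ T f n x‖ ≤ C := fun n x => by
    rw [birkhoffAverage, norm_smul, norm_inv, RCLike.norm_natCast, ← div_eq_inv_mul]
    refine div_le_of_le_mul₀ (Nat.cast_nonneg n) ((norm_nonneg _).trans (hfC x)) ?_
    rw [birkhoffSum, mul_comm]
    simpa using norm_sum_le_of_le (Finset.range n) fun k _ => hfC (T^[k] x)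
  have hlim : Tendsto (fun k => ∫ x, birkhoffAverage ℝ T f (ns k) x ∂μ) atTop
      (𝓝 (∫ x, g x ∂μ)) :=
    tendsto_integral_of_dominated_convergence (fun _ => C)
      (fun k => Measurable.aestronglyMeasurable <|
        (measurable_birkhoffSum hT.measurable hf (ns k)).const_smul (ns k : ℝ)⁻¹)
      (integrable_const C) (fun k => ae_of_all _ (hbound (ns k))) h
  refine tendsto_nhds_unique (tendsto_const_nhds.congr' ?_) hlim
  filter_upwards [hns.eventually_gt_atTop 0] with k hk
  have hfint : Integrable f μ := .of_bound hf.aestronglyMeasurable C (ae_of_all _ hfC)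
  simp only [birkhoffAverage]
  rw [integral_smul, integral_birkhoffSum hT hfint, smul_eq_mul,
    inv_mul_cancel_left₀ (Nat.cast_ne_zero.2 hk.ne')]

lemma tendstoInMeasure_birkhoffAverage_of_ergodic [IsProbabilityMeasure μ] (hT : Ergodic T μ)
    (hS : MeasurableSet S) :
    TendstoInMeasure μ (birkhoffAverage ℝ T (S.indicator 1)) atTop fun _ => μ.real S := by
  obtain ⟨g, hgm, hgT, hlim⟩ := exists_tendstoInMeasure_birkhoffAverage hT.toMeasurePreserving
    (memLp_indicator_const 2 hS (1 : ℝ) (.inr (measure_ne_top μ S)))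
  obtain ⟨c, hc⟩ := hT.ae_eq_const_of_ae_eq_comp_ae hgm hgT
  have hlim_c := hlim.congr_right hc
  obtain ⟨ns, hns, hae⟩ := hlim_c.exists_seq_tendsto_ae
  have hcS := integral_eq_of_tendsto_birkhoffAverage hT.toMeasurePreserving
    (measurable_one.indicator hS) (norm_indicator_one_le S) hns.tendsto_atTop hae
  rw [integral_indicator_one hS] at hcS
  simp only [Function.const_apply, integral_const, probReal_univ, one_smul] at hcS
  rw [hcS]
  exact hlim_c

lemma eventually_measureReal_le_visits_le_of_ergodic [IsProbabilityMeasure μ] (hT : Ergodic T μ)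
    (hS : MeasurableSet S) {c η : ℝ} (hc : μ.real S < c) (hη : 0 < η) :
    ∀ᶠ n : ℕ in atTop, μ.real {x | c * n ≤ visits T S n x} ≤ η := by
  have hlim := tendstoInMeasure_iff_measureReal_norm.1
    (tendstoInMeasure_birkhoffAverage_of_ergodic hT hS) _ (sub_pos.2 hc)
  filter_upwards [hlim.eventually_le_const hη, eventually_gt_atTop 0] with n hn hn0
  refine (measureReal_mono fun x hx => ?_).trans hn
  have hx' : c ≤ visits T S n x / n := (le_div_iff₀ (Nat.cast_pos.2 hn0)).2 hx
  rw [mem_ofPred_eq, birkhoffAverage_indicator_one]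
  exact (sub_le_sub_right hx' _).trans (Real.le_norm_self _)

end MeanErgodic

section CondExpKernel

open ProbabilityTheory

variable {m mX : MeasurableSpace X} [StandardBorelSpace X] {μ : Measure X} [IsFiniteMeasure μ]

lemma lintegral_condExpKernel_apply (hm : m ≤ mX) {B : Set X} (hB : MeasurableSet B) :
    ∫⁻ y, condExpKernel μ m y B ∂μ = μ B := by
  rw [← lintegral_trim hm (Kernel.measurable_coe _ hB),
    ← Measure.bind_apply hB (Kernel.aemeasurable _), condExpKernel_comp_trim hm]

lemma ae_ae_condExpKernel (hm : m ≤ mX) {p : X → Prop} (h : ∀ᵐ x ∂μ, p x) :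
    ∀ᵐ y ∂μ, ∀ᵐ x ∂condExpKernel μ m y, p x := by
  rw [← condExpKernel_comp_trim (μ := μ) hm] at h
  exact ae_of_ae_trim hm (Measure.ae_ae_of_ae_comp h)

lemma ae_condExpKernel_ae_eq (hm : m ≤ mX) {g : X → ℝ} (hg : Measurable[m] g) :
    ∀ᵐ y ∂μ, ∀ᵐ x ∂condExpKernel μ m y, g x = g y := by
  let _ : MeasurableSpace (X × X) := m.prod mX
  have hset : MeasurableSet {p : X × X | g p.2 = g p.1} :=
    measurableSet_eq_fun ((hg.mono hm le_rfl).comp measurable_snd)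
      (hg.comp (@measurable_fst _ _ m mX))
  have hdiag : Measurable (Function.diag : X → X × X) :=
    (measurable_id.mono le_rfl hm).prodMk measurable_id
  refine ae_of_ae_trim hm (Measure.ae_ae_of_ae_compProd (p := fun p => g p.2 = g p.1) ?_)
  rw [compProd_trim_condExpKernel hm]
  exact (ae_map_iff hdiag.aemeasurable hset).2 (ae_of_all μ fun _ => rfl)

lemma measure_le_of_ae_condExpKernel_le (hm : m ≤ mX) {B S : Set X} (hB : MeasurableSet B)
    (hS : MeasurableSet S) {e : ENNReal}
    (h : ∀ᵐ y ∂μ, y ∈ S → condExpKernel μ m y B ≤ e) : μ B ≤ e * μ S + μ Sᶜ := by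
  rw [← lintegral_condExpKernel_apply hm hB, ← lintegral_add_compl _ hS]
  gcongr
  · exact (setLIntegral_mono_ae measurable_const.aemeasurable h).trans_eq (setLIntegral_const S e)
  · calc ∫⁻ y in Sᶜ, condExpKernel μ m y B ∂μ ≤ ∫⁻ _ in Sᶜ, 1 ∂μ :=
          lintegral_mono fun y => prob_le_one
      _ = μ Sᶜ := by simp

end CondExpKernel

section ErgodicDecomposition

open ProbabilityTheory MeasurableSpace

variable [MeasurableSpace X] {T : X → X} {μ : Measure X}

lemma exists_countable_isPiSystem_generateFrom (X : Type*) [mX : MeasurableSpace X]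
    [CountablyGenerated X] :
    ∃ C : Set (Set X), C.Countable ∧ IsPiSystem C ∧ mX = generateFrom C :=
  ⟨generateSetAlgebra (countableGeneratingSet X),
    countable_generateSetAlgebra (countable_countableGeneratingSet (α := X)),
    fun _ hs _ ht _ => isSetAlgebra_generateSetAlgebra.inter_mem hs ht, by
    rw [generateFrom_generateSetAlgebra_eq, generateFrom_countableGeneratingSet]⟩

lemma ergodic_of_tendsto_birkhoffAverage [IsProbabilityMeasure μ] (hT : MeasurePreserving T μ μ)
    {C : Set (Set X)} (hC : IsPiSystem C) (hgen : ‹MeasurableSpace X› = generateFrom C)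
    (h : ∀ S ∈ C, ∃ ns : ℕ → ℕ, Tendsto ns atTop atTop ∧ ∃ c : ℝ, ∀ᵐ x ∂μ,
      Tendsto (fun k => birkhoffAverage ℝ T (S.indicator 1) (ns k) x) atTop (𝓝 c)) :
    Ergodic T μ := by
  refine ⟨hT, ⟨fun {A} hA hAT => ?_⟩⟩
  have hmeas : ∀ S ∈ C, MeasurableSet S := fun S hS => by
    rw [hgen]; exact measurableSet_generateFrom hS
  have hTA : MeasurePreserving T (μ.restrict A) (μ.restrict A) := by
    simpa only [hAT] using hT.restrict_preimage hA
  have hindep : ∀ S ∈ C, (μ.restrict A).real S = μ.real A * μ.real S := fun S hS => by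
    obtain ⟨ns, hns, c, hc⟩ := h S hS
    have hf := measurable_one (α := ℝ).indicator (hmeas S hS)
    have hμ := integral_eq_of_tendsto_birkhoffAverage hT hf (norm_indicator_one_le S) hns hc
    have hμA := integral_eq_of_tendsto_birkhoffAverage hTA hf (norm_indicator_one_le S) hns
      (ae_restrict_of_ae hc)
    rw [integral_indicator_one (hmeas S hS)] at hμ hμA
    rw [hμ, hμA]
    simp
  have : IsFiniteMeasure (μ A • μ) := μ.smul_finite (measure_ne_top μ A)
  have hrestrict : μ.restrict A = μ A • μ := by
    refine ext_of_generate_finite C hgen hC (fun S hS => ?_) (by simp)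
    rw [← measureReal_eq_measureReal_iff, hindep S hS, measureReal_ennreal_smul_apply,
      measureReal_def μ A]
  have hzeroOne : μ.real A = 0 ∨ μ.real A = 1 := by
    have hsq : μ.real A = μ.real A * μ.real A := by
      conv_lhs => rw [← measureReal_restrict_apply_self, hrestrict]
      rw [measureReal_ennreal_smul_apply, measureReal_def μ A]
    exact (eq_zero_or_one_of_sq_eq_self (by rw [sq]; exact hsq.symm))
  rw [eventuallyConst_set']
  refine hzeroOne.imp (fun h0 => ae_eq_empty.2 ((measureReal_eq_zero_iff).1 h0)) fun h1 => ?_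
  exact ae_eq_univ.2 ((prob_compl_eq_zero_iff hA).2 ((ENNReal.toReal_eq_one_iff _).1 h1))

lemma exists_measurable_invariants_ae_eq (hT : Measure.QuasiMeasurePreserving T μ μ) {g : X → ℝ}
    (hg : AEMeasurable g μ) (hgT : g ∘ T =ᵐ[μ] g) :
    ∃ g' : X → ℝ, Measurable[invariants T] g' ∧ g' =ᵐ[μ] g := by
  obtain ⟨h, hh, hgh⟩ := hg
  set g' : X → ℝ := fun x => (limsup (fun n : ℕ => (h (T^[n] x) : EReal)) atTop).toReal
  have hg' : Measurable g' := measurable_ereal_toReal.comp <| Measurable.limsup fun n =>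
    measurable_coe_real_ereal.comp (hh.comp (hT.measurable.iterate n))
  have hinv : g' ∘ T = g' := funext fun x => congrArg EReal.toReal <| by
    simpa only [Function.iterate_succ_apply] using
      limsup_nat_add (fun n : ℕ => (h (T^[n] x) : EReal)) 1
  refine ⟨g', measurable_invariants_dom.2 ⟨hg', fun s _ => by rw [hinv]⟩, ?_⟩
  have hiter : ∀ n, h ∘ T^[n] =ᵐ[μ] g := fun n => by
    refine ((hT.iterate n).ae_eq_comp hgh.symm).trans ?_
    induction n with
    | zero => rfl
    | succ n ih =>
      rw [Function.iterate_succ, ← Function.comp_assoc]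
      exact (hT.ae_eq_comp ih).trans hgT
  filter_upwards [ae_all_iff.2 hiter] with x hx
  simp only [Function.comp_apply] at hx
  simp [g', hx]

lemma condExp_comp_invariants [IsFiniteMeasure μ] (hT : MeasurePreserving T μ μ) {f : X → ℝ}
    (hf : Integrable f μ) : μ[f ∘ T | invariants T] =ᵐ[μ] μ[f | invariants T] := by
  refine (ae_eq_condExp_of_forall_setIntegral_eq (invariants_le T)
    (hT.integrable_comp_of_integrable hf) (fun s _ _ => integrable_condExp.integrableOn)
    (fun s hs _ => ?_) stronglyMeasurable_condExp.aestronglyMeasurable).symm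
  obtain ⟨hsm, hsT⟩ := measurableSet_invariants.1 hs
  have hTs : MeasurePreserving T (μ.restrict s) (μ.restrict s) := by
    simpa only [hsT] using hT.restrict_preimage hsm
  rw [setIntegral_condExp (invariants_le T) hf hs]
  have hfm : AEStronglyMeasurable f ((μ.restrict s).map T) :=
    hTs.map_eq.symm ▸ hf.aestronglyMeasurable.restrict
  exact (congrArg (integral · f) hTs.map_eq).symm.trans (integral_map hTs.aemeasurable hfm)

variable [StandardBorelSpace X] [IsProbabilityMeasure μ]

lemma ae_measurePreserving_condExpKernel_invariants (hT : MeasurePreserving T μ μ) :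
    ∀ᵐ y ∂μ, MeasurePreserving T (condExpKernel μ (invariants T) y)
      (condExpKernel μ (invariants T) y) := by
  obtain ⟨C, hCc, hC, hgen⟩ := exists_countable_isPiSystem_generateFrom X
  have hmeas : ∀ B ∈ C, MeasurableSet B := fun B hB => by
    rw [hgen]; exact measurableSet_generateFrom hB
  have hinv : ∀ᵐ y ∂μ, ∀ B ∈ C, condExpKernel μ (invariants T) y (T ⁻¹' B) =
      condExpKernel μ (invariants T) y B := (ae_ball_iff hCc).2 fun B hB => by
    filter_upwards [condExpKernel_ae_eq_condExp (μ := μ) (invariants_le T) (hmeas B hB),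
      condExpKernel_ae_eq_condExp (μ := μ) (invariants_le T) (hT.measurable (hmeas B hB)),
      condExp_comp_invariants hT ((integrable_const (1 : ℝ)).indicator (hmeas B hB))]
      with y hy hyT hcomp
    rw [← measureReal_eq_measureReal_iff, hy, hyT, ← hcomp]
    rfl
  filter_upwards [hinv] with y hy
  refine ⟨hT.measurable, ext_of_generate_finite C hgen hC (fun B hB => ?_) ?_⟩
  · rw [Measure.map_apply hT.measurable (hmeas B hB), hy B hB]
  · rw [Measure.map_apply hT.measurable MeasurableSet.univ, preimage_univ]

theorem ae_ergodic_condExpKernel_invariants (hT : MeasurePreserving T μ μ) :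
    ∀ᵐ y ∂μ, Ergodic T (condExpKernel μ (invariants T) y) := by
  obtain ⟨C, hCc, hC, hgen⟩ := exists_countable_isPiSystem_generateFrom X
  have hmeas : ∀ B ∈ C, MeasurableSet B := fun B hB => by
    rw [hgen]; exact measurableSet_generateFrom hB
  have hlim : ∀ᵐ y ∂μ, ∀ B ∈ C, ∃ ns : ℕ → ℕ, Tendsto ns atTop atTop ∧ ∃ c : ℝ,
      ∀ᵐ x ∂condExpKernel μ (invariants T) y,
        Tendsto (fun k => birkhoffAverage ℝ T (B.indicator 1) (ns k) x) atTop (𝓝 c) := by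
    refine (ae_ball_iff hCc).2 fun B hB => ?_
    obtain ⟨g, hgm, hgT, hg⟩ := exists_tendstoInMeasure_birkhoffAverage hT
      (memLp_indicator_const 2 (hmeas B hB) (1 : ℝ) (.inr (measure_ne_top μ B)))
    obtain ⟨ns, hns, hns_lim⟩ := hg.exists_seq_tendsto_ae
    obtain ⟨g', hg'm, hg'⟩ := exists_measurable_invariants_ae_eq hT.quasiMeasurePreserving
      hgm.aemeasurable hgT
    filter_upwards [ae_ae_condExpKernel (invariants_le T) (hns_lim.and hg'),
      ae_condExpKernel_ae_eq (invariants_le T) hg'm] with y hy hconst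
    refine ⟨ns, hns.tendsto_atTop, g' y, ?_⟩
    filter_upwards [hy, hconst] with x ⟨hx, hxg⟩ hxy
    rw [← hxy, hxg]
    exact hx
  filter_upwards [hlim, ae_measurePreserving_condExpKernel_invariants hT] with y hy hTy
  exact ergodic_of_tendsto_birkhoffAverage hTy hC hgen hy

end ErgodicDecomposition

section ErgodicComponents

open ProbabilityTheory MeasurableSpace

variable {α : Type*} [MeasurableSpace X] {T : X → X} {μ : Measure X}

lemma exists_finset_measure_compl_biUnion_le [Countable α] [IsFiniteMeasure μ] {Y : α → Set X}
    (hY : ∀ c, MeasurableSet (Y c)) (h : ∀ᵐ x ∂μ, ∃ c, x ∈ Y c) {e : ENNReal} (he : 0 < e) :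
    ∃ J : Finset α, μ (⋃ c ∈ J, Y c)ᶜ ≤ e := by
  have hlim := tendsto_measure_iInter_atTop (μ := μ) (s := fun J : Finset α => (⋃ c ∈ J, Y c)ᶜ)
    (fun J => (J.measurableSet_biUnion fun c _ => hY c).compl.nullMeasurableSet)
    (fun J J' hJ => compl_subset_compl.2 (biUnion_subset_biUnion_left hJ))
    ⟨∅, measure_ne_top _ _⟩
  have hsub : (⋂ J : Finset α, (⋃ c ∈ J, Y c)ᶜ) ⊆ {x | ∃ c, x ∈ Y c}ᶜ := fun x hx ⟨c, hc⟩ =>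
    mem_iInter.1 hx {c} (mem_biUnion (Finset.mem_singleton_self c) hc)
  have hnull : μ (⋂ J : Finset α, (⋃ c ∈ J, Y c)ᶜ) = 0 := measure_mono_null hsub h
  rw [hnull] at hlim
  exact (hlim.eventually_le_const he).exists

lemma exists_finset_measureReal_le_visits_le [StandardBorelSpace X] [Countable α]
    [IsProbabilityMeasure μ] (hT : MeasurePreserving T μ μ) {G : α → Set X}
    (hG : ∀ c, MeasurableSet (G c)) {e η : ℝ}
    (he : 0 < e) (hη : 0 < η) (h : ∀ ν ∈ ergodicMeasures T, ∃ c, ν.real (G c) ≤ e * η) :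
    ∃ J : Finset α, ∀ n : ℕ, 0 < n →
      μ.real {x | ∀ c ∈ J, e * n ≤ visits T (G c) n x} ≤ 2 * η := by
  set κ := condExpKernel μ (invariants T)
  set Y : α → Set X := fun c => {y | κ y (G c) ≤ ENNReal.ofReal (e * η)}
  have hκG : ∀ c, Measurable fun y => κ y (G c) := fun c =>
    (Kernel.measurable_coe κ (hG c)).mono (invariants_le T) le_rfl
  have hY : ∀ c, MeasurableSet (Y c) := fun c => measurableSet_le (hκG c) measurable_const
  have mem_Y : ∀ {y c}, y ∈ Y c ↔ (κ y).real (G c) ≤ e * η := fun {y c} =>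
    ENNReal.le_ofReal_iff_toReal_le (measure_ne_top _ _) (by positivity)
  obtain ⟨J, hJ⟩ := exists_finset_measure_compl_biUnion_le hY (e := ENNReal.ofReal η)
    ((ae_ergodic_condExpKernel_invariants hT).mono fun y hy =>
      (h (κ y) ⟨inferInstance, hy⟩).imp fun c hc => mem_Y.2 hc) (ENNReal.ofReal_pos.2 hη)
  refine ⟨J, fun n hn => ?_⟩
  set B := {x | ∀ c ∈ J, e * n ≤ visits T (G c) n x} with hB
  have hBm : MeasurableSet B := by
    have : B = ⋂ c ∈ J, {x | e * n ≤ visits T (G c) n x} := by ext x; simp [hB]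
    rw [this]
    exact J.measurableSet_biInter fun c _ =>
      measurableSet_le measurable_const (measurable_visits hT.measurable (hG c) n)
  have hκB : ∀ᵐ y ∂μ, y ∈ ⋃ c ∈ J, Y c → κ y B ≤ ENNReal.ofReal η := by
    filter_upwards [ae_measurePreserving_condExpKernel_invariants hT] with y hTy hy
    obtain ⟨c, hc, hyc⟩ := mem_iUnion₂.1 hy
    rw [ENNReal.le_ofReal_iff_toReal_le (measure_ne_top _ _) hη.le]
    calc (κ y).real B ≤ (κ y).real {x | e * n ≤ visits T (G c) n x} :=
          measureReal_mono fun x hx => hx c hc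
      _ ≤ (κ y).real (G c) / e := measureReal_le_visits_le hTy (hG c) he hn
      _ ≤ η := by rw [div_le_iff₀' he]; exact mem_Y.1 hyc
  have hμB := (measure_le_of_ae_condExpKernel_le (invariants_le T) hBm
    (J.measurableSet_biUnion fun c _ => hY c) hκB).trans
      (add_le_add (mul_le_of_le_one_right' prob_le_one) hJ)
  rw [← ENNReal.ofReal_add hη.le hη.le, ← two_mul] at hμB
  exact ENNReal.toReal_le_of_le_ofReal (by positivity) hμB

end ErgodicComponents

section HammingCovers

variable {ι : Type*} {T : X → X} {U : ι → Set X} {E : Finset (List ι)} {n : ℕ}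
  {a b ρ θ δ : ℝ}

lemma IsBlockCode.mono (hE : IsBlockCode E n a) (hab : a ≤ b) : IsBlockCode E n b :=
  ⟨hE.length_eq, hE.card_le.trans (Real.exp_le_exp.2 (by gcongr))⟩

lemma eventually_exists_isBlockCode_two_scales (d : ι) (ha : 0 ≤ a) (hab : a < b) (hρ : 0 < ρ) :
    ∀ᶠ n : ℕ in atTop, ∀ᶠ m : ℕ in atTop, ∀ E E' : Finset (List ι), IsBlockCode E m a →
      IsBlockCode E' n a → ∀ θ ≥ 0, ∀ᶠ L : ℕ in atTop, ∃ F, IsBlockCode F L b ∧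
        ∀ x, x ∈ shadowed T U F (θ * visits T (shadowed T U E 0)ᶜ L x +
          visits T (shadowed T U E' (θ * n))ᶜ L x + ρ * L) := by
  classical
  have hletter : 0 < (1 - Real.exp (-b)) / 2 :=
    half_pos (sub_pos.2 (Real.exp_lt_one_iff.2 (by linarith)))
  have small := eventually_exp_neg_mul_le (sub_pos.2 hab) hletter
  filter_upwards [small, eventually_gt_atTop 0] with n hnexp hn
  filter_upwards [small, eventually_gt_atTop 0,
    tendsto_natCast_atTop_atTop.eventually_ge_atTop (n / (ρ / 2))] with m hmexp hm hnm E E' hE hE'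
  intro θ hθ
  have kraft : kraftSum b (insert [d] (E ∪ E')) ≤ 1 := by
    linarith [kraftSum_insert_singleton_le b d (E ∪ E'), kraftSum_union_le b E E',
      hE.kraftSum_le b, hE'.kraftSum_le b]
  have hratio : (n / m : ℝ) ≤ ρ / 2 := by
    rw [div_le_iff₀ (by positivity)] at hnm
    rwa [div_le_iff₀' (Nat.cast_pos.2 hm)]
  filter_upwards [tendsto_natCast_atTop_atTop.eventually_ge_atTop ((n + m : ℕ) / (ρ / 2))]
    with L hL
  rw [div_le_iff₀ (by positivity)] at hL
  refine ⟨_, isBlockCode_parsings kraft L, fun x => ?_⟩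
  obtain ⟨l, hl, hlx⟩ := exists_parsing_two_scales (T := T) (U := U) d hm hn hE.length_eq
    hE'.length_eq hθ L x
  have : (n / m : ℝ) * L ≤ ρ / 2 * L := by gcongr
  exact ⟨l, hl, hlx.trans (by linarith)⟩

variable [MeasurableSpace X] {μ : Measure X}

/-- Up to arbitrarily small losses in rate, proportion and measure, `μ`-almost all long orbits are
shadowed by a block code of rate `a` with a proportion at most `θ` of mismatches. -/
def HasHammingCover (T : X → X) (U : ι → Set X) (μ : Measure X) (a θ : ℝ) : Prop :=
  ∀ b > a, ∀ τ > θ, ∀ η > 0, ∀ᶠ L : ℕ in atTop, ∃ E, IsBlockCode E L b ∧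
    μ.real (shadowed T U E (τ * L))ᶜ ≤ η

lemma hasHammingCover_one (d : ι) (ha : 0 ≤ a) : HasHammingCover T U μ a 1 := by
  intro b hb τ hτ η hη
  refine Eventually.of_forall fun L => ⟨{List.replicate L d}, ⟨by simp, ?_⟩, ?_⟩
  · rw [Finset.card_singleton, Nat.cast_one, Real.one_le_exp_iff]
    exact mul_nonneg (ha.trans hb.le) L.cast_nonneg
  · have hall : shadowed T U {List.replicate L d} (τ * L) = univ := by
      refine eq_univ_of_forall fun x => ⟨_, Finset.mem_singleton_self _, ?_⟩
      calc (mismatches T U x (List.replicate L d) : ℝ) ≤ L := by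
            exact_mod_cast (mismatches_le_length (U := U) x _).trans_eq List.length_replicate
        _ ≤ τ * L := le_mul_of_one_le_left L.cast_nonneg hτ.le
    rw [hall, compl_univ, measureReal_empty]
    exact hη.le

variable [TopologicalSpace X] [BorelSpace X] [IsProbabilityMeasure μ]

/-- The ergodic theorem makes an orbit visit a set of measure above `δ` with frequency above `δ`;
exact words started at those visits replace a proportion `δ` of the old words. -/
lemma HasHammingCover.improve (h : HasHammingCover T U μ a θ) (hTc : Continuous T)
    (hU : ∀ i, IsOpen (U i)) (d : ι) (hT : Ergodic T μ) (ha : 0 ≤ a) (hθ : 0 ≤ θ) (hδ : 0 ≤ δ)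
    (hk : ∃ᶠ m : ℕ in atTop, ∃ E, IsBlockCode E m a ∧ δ < μ.real (shadowed T U E 0)) :
    HasHammingCover T U μ a ((1 - δ) * θ) := by
  intro b hb τ hτ η hη
  obtain ⟨b', hab', hb'⟩ := exists_between hb
  obtain ⟨e, he, hτe⟩ : ∃ e > 0, (1 - δ) * θ + 3 * e = τ :=
    ⟨(τ - (1 - δ) * θ) / 3, by linarith, by ring⟩
  obtain ⟨n, hn, E', hE', hμE'⟩ :=
    ((eventually_exists_isBlockCode_two_scales (T := T) (U := U) d (ha.trans hab'.le) hb' he).and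
      (h b' hab' (θ + e) (by linarith) (e * (η / 2)) (by positivity))).exists
  obtain ⟨m, ⟨E, hE, hμE⟩, hm⟩ := (hk.and_eventually hn).exists
  have hmeas : ∀ D c, MeasurableSet (shadowed T U D c)ᶜ := fun D c =>
    (isOpen_shadowed hTc hU D c).measurableSet.compl
  have hmiss : μ.real (shadowed T U E 0)ᶜ < 1 - δ := by
    rw [probReal_compl_eq_one_sub (isOpen_shadowed hTc hU E 0).measurableSet]
    linarith
  filter_upwards [hm E E' (hE.mono hab'.le) hE' (θ + e) (by positivity),
    eventually_measureReal_le_visits_le_of_ergodic hT (hmeas E 0) hmiss (half_pos hη),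
    eventually_gt_atTop 0] with L ⟨F, hF, hFx⟩ hfreq hL
  have hmarkov := measureReal_le_visits_le hT.toMeasurePreserving (hmeas E' ((θ + e) * n)) he hL
  refine ⟨F, hF, ?_⟩
  have hsub : (shadowed T U F (τ * L))ᶜ ⊆ {x | (1 - δ) * L ≤ visits T (shadowed T U E 0)ᶜ L x} ∪
      {x | e * L ≤ visits T (shadowed T U E' ((θ + e) * n))ᶜ L x} := by
    refine compl_subset_comm.1 fun x hx => ?_
    simp only [mem_compl_iff, mem_union, mem_ofPred_eq, not_or, not_le] at hx
    obtain ⟨l, hl, hlx⟩ := hFx x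
    refine ⟨l, hl, hlx.trans ?_⟩
    have hmain := mul_le_mul_of_nonneg_left hx.1.le (add_nonneg hθ he.le)
    have : 0 ≤ δ * e * L := by positivity
    rw [← hτe]
    linarith [hx.2]
  calc μ.real (shadowed T U F (τ * L))ᶜ ≤ η / 2 + μ.real (shadowed T U E' ((θ + e) * n))ᶜ / e :=
        (measureReal_mono hsub).trans
          ((measureReal_union_le _ _).trans (add_le_add hfreq hmarkov))
    _ ≤ η / 2 + η / 2 := add_le_add_right ((div_le_iff₀' he).2 hμE') _
    _ = η := add_halves η

lemma hasHammingCover_zero_of_ergodic (hTc : Continuous T) (hU : ∀ i, IsOpen (U i)) (d : ι)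
    (hT : Ergodic T μ) (ha : 0 ≤ a) (hδ : 0 < δ) (hδ1 : δ < 1)
    (hk : ∃ᶠ m : ℕ in atTop, ∃ E, IsBlockCode E m a ∧ δ < μ.real (shadowed T U E 0)) :
    HasHammingCover T U μ a 0 := by
  have hpow : ∀ k : ℕ, HasHammingCover T U μ a ((1 - δ) ^ k) := by
    intro k
    induction k with
    | zero => exact hasHammingCover_one d ha
    | succ k ih =>
      rw [pow_succ']
      exact ih.improve hTc hU d hT ha (pow_nonneg (by linarith) k) hδ.le hk
  intro b hb τ hτ
  obtain ⟨k, hkτ⟩ := exists_pow_lt_of_lt_one hτ (show 1 - δ < 1 by linarith)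
  exact hpow k b hb τ hkτ

lemma hasHammingCover_of_forall_ergodic [Countable ι] [StandardBorelSpace X] (hTc : Continuous T)
    (hU : ∀ i, IsOpen (U i)) (d : ι) (ha : 0 ≤ a) (hθ : 0 ≤ θ)
    (h : ∀ ν ∈ ergodicMeasures T, HasHammingCover T U ν a θ) (hT : MeasurePreserving T μ μ) :
    HasHammingCover T U μ a θ := by
  intro b hb τ hτ η hη
  obtain ⟨b', hab', hb'⟩ := exists_between hb
  obtain ⟨e, he, hτe⟩ : ∃ e > 0, θ + 3 * e = τ := ⟨(τ - θ) / 3, by linarith, by ring⟩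
  obtain ⟨n₀, hn₀⟩ := (eventually_exists_isBlockCode_of_visits (T := T) (U := U) d
    (ha.trans hab'.le) hb' (show 0 ≤ θ + e by positivity)
    (show θ + e + e < τ by linarith)).exists
  let C := {c : ℕ × Finset (List ι) // n₀ ≤ c.1 ∧ IsBlockCode c.2 c.1 b'}
  let G : C → Set X := fun c => (shadowed T U c.1.2 ((θ + e) * c.1.1))ᶜ
  obtain ⟨J, hJ⟩ := exists_finset_measureReal_le_visits_le hT (G := G)
    (fun c => (isOpen_shadowed hTc hU _ _).measurableSet.compl) he (half_pos hη) fun ν hν => by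
      obtain ⟨n, ⟨E, hE, hν⟩, hn⟩ :=
        ((h ν hν b' hab' (θ + e) (by linarith) (e * (η / 2)) (by positivity)).and
          (eventually_ge_atTop n₀)).exists
      exact ⟨⟨(n, E), hn, hE⟩, hν⟩
  filter_upwards [hn₀ (J.map (Function.Embedding.subtype _)) (by simp +contextual),
    eventually_gt_atTop 0] with L ⟨F, hF, hFx⟩ hL
  refine ⟨F, hF, (measureReal_mono ?_).trans ((hJ L hL).trans_eq (mul_div_cancel₀ η two_ne_zero))⟩
  refine fun x hx c hc => le_of_not_ge fun hcx => hx (hFx x ⟨c.1, ?_, hcx⟩)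
  exact Finset.mem_map_of_mem (Function.Embedding.subtype _) hc

end HammingCovers

section HammingBalls

variable {ι : Type*} [Fintype ι] [DecidableEq ι] {T : X → X} {U : ι → Set X}

/-- The words obtained from a word by changing at most `k` of its letters. -/
def hammingBall : List ι → ℕ → Finset (List ι)
  | [], _ => {[]}
  | d :: l, 0 => (hammingBall l 0).image (d :: ·)
  | d :: l, k + 1 => (hammingBall l (k + 1)).image (d :: ·) ∪
      Finset.image₂ (· :: ·) Finset.univ (hammingBall l k)

lemma length_of_mem_hammingBall {l : List ι} {k : ℕ} {q : List ι} (hq : q ∈ hammingBall l k) :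
    q.length = l.length := by
  induction l generalizing k q with
  | nil => rw [hammingBall, Finset.mem_singleton] at hq; rw [hq]
  | cons d l ih =>
    cases k with
    | zero =>
      obtain ⟨p, hp, rfl⟩ := Finset.mem_image.1 hq
      exact congrArg Nat.succ (ih hp)
    | succ k =>
      rcases Finset.mem_union.1 hq with hq | hq
      · obtain ⟨p, hp, rfl⟩ := Finset.mem_image.1 hq
        exact congrArg Nat.succ (ih hp)
      · obtain ⟨e, -, p, hp, rfl⟩ := Finset.mem_image₂.1 hq
        exact congrArg Nat.succ (ih hp)

/-- The Chernoff bound: the generating polynomial of the Hamming distance is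
`(1 + (|ι| - 1) z) ^ |l|`. -/
lemma pow_mul_card_hammingBall_le {z : ℝ} (hz : 0 ≤ z) (hz1 : z ≤ 1) (l : List ι) (k : ℕ) :
    z ^ k * (hammingBall l k).card ≤ (1 + Fintype.card ι * z) ^ l.length := by
  have hq : 1 ≤ 1 + Fintype.card ι * z := le_add_of_nonneg_right (by positivity)
  induction l generalizing k with
  | nil => simpa [hammingBall] using pow_le_one₀ hz hz1
  | cons d l ih =>
    cases k with
    | zero =>
      have hcard : (hammingBall (d :: l) 0).card ≤ (hammingBall l 0).card := Finset.card_image_le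
      calc z ^ 0 * ((hammingBall (d :: l) 0).card : ℝ) ≤ z ^ 0 * (hammingBall l 0).card := by
            gcongr
        _ ≤ (1 + Fintype.card ι * z) ^ l.length := ih 0
        _ ≤ (1 + Fintype.card ι * z) ^ (l.length + 1) := pow_le_pow_right₀ hq (Nat.le_succ _)
    | succ k =>
      have hcard : (hammingBall (d :: l) (k + 1)).card ≤
          (hammingBall l (k + 1)).card + Fintype.card ι * (hammingBall l k).card :=
        (Finset.card_union_le _ _).trans
          (add_le_add Finset.card_image_le (Finset.card_image₂_le _ _ _))
      calc z ^ (k + 1) * ((hammingBall (d :: l) (k + 1)).card : ℝ)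
          ≤ z ^ (k + 1) *
              ((hammingBall l (k + 1)).card + Fintype.card ι * (hammingBall l k).card) := by
            gcongr
            exact_mod_cast hcard
        _ = z ^ (k + 1) * (hammingBall l (k + 1)).card +
              Fintype.card ι * z * (z ^ k * (hammingBall l k).card) := by ring
        _ ≤ (1 + Fintype.card ι * z) ^ l.length +
              Fintype.card ι * z * (1 + Fintype.card ι * z) ^ l.length := by
            gcongr
            · exact ih (k + 1)
            · exact ih k
        _ = (1 + Fintype.card ι * z) ^ (l.length + 1) := by ring

lemma exists_card_hammingBall_le_exp {η : ℝ} (hη : 0 < η) : ∃ σ > (0 : ℝ), ∀ (l : List ι) (k : ℕ),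
    (k : ℝ) ≤ σ * l.length → ((hammingBall l k).card : ℝ) ≤ Real.exp (η * l.length) := by
  obtain ⟨n, hn, hnpos⟩ := ((eventually_exp_neg_mul_le one_pos
    (show 0 < η / 2 / (Fintype.card ι + 1) by positivity)).and (eventually_gt_atTop 0)).exists
  set z := Real.exp (-1 * n)
  have hletters : 1 + Fintype.card ι * z ≤ Real.exp (η / 2) := by
    rw [le_div_iff₀ (by positivity)] at hn
    linarith [Real.add_one_le_exp (η / 2), Real.exp_pos (-1 * n : ℝ)]
  refine ⟨η / 2 / n, by positivity, fun l k hk => ?_⟩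
  have hnk : (n * k : ℝ) ≤ η / 2 * l.length := by
    rw [div_mul_eq_mul_div, le_div_iff₀' (by positivity)] at hk
    exact hk
  have hzk : Real.exp (n * k) * z ^ k = 1 := by
    rw [← Real.exp_nat_mul, ← Real.exp_add, Real.exp_eq_one_iff]
    ring
  calc ((hammingBall l k).card : ℝ) = Real.exp (n * k) * (z ^ k * (hammingBall l k).card) := by
        rw [← mul_assoc, hzk, one_mul]
    _ ≤ Real.exp (n * k) * (1 + Fintype.card ι * z) ^ l.length := by
        gcongr
        exact pow_mul_card_hammingBall_le (Real.exp_pos _).le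
          (Real.exp_le_one_iff.2 (by linarith [n.cast_nonneg (α := ℝ)])) l k
    _ ≤ Real.exp (η / 2 * l.length) * Real.exp (η / 2) ^ l.length := by gcongr
    _ = Real.exp (η * l.length) := by
        rw [← Real.exp_nat_mul, ← Real.exp_add]
        ring_nf

lemma exists_mem_hammingBall_mismatches_eq_zero (hcov : ∀ x, ∃ d, x ∈ U d) {l : List ι} {k : ℕ}
    {x : X} (hx : mismatches T U x l ≤ k) : ∃ q ∈ hammingBall l k, mismatches T U x q = 0 := by
  induction l generalizing k x with
  | nil => exact ⟨[], Finset.mem_singleton_self _, rfl⟩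
  | cons d l ih =>
    rw [mismatches] at hx
    split_ifs at hx with hd
    · obtain ⟨q, hq, hxq⟩ := ih ((zero_add _).symm.trans_le hx)
      refine ⟨d :: q, ?_, by simp [mismatches, hd, hxq]⟩
      cases k with
      | zero => exact Finset.mem_image_of_mem _ hq
      | succ k => exact Finset.mem_union_left _ (Finset.mem_image_of_mem _ hq)
    · cases k with
      | zero => omega
      | succ k =>
        obtain ⟨q, hq, hxq⟩ := ih (k := k) (x := T x) (by omega)
        obtain ⟨e, he⟩ := hcov x
        exact ⟨e :: q, Finset.mem_union_right _ (Finset.mem_image₂_of_mem (Finset.mem_univ e) hq),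
          by simp [mismatches, he, hxq]⟩

end HammingBalls

section ExactCodes

variable {ι : Type*} {T : X → X} {U : ι → Set X}

lemma exists_isBlockCode_shadowed_zero [Finite ι] (hcov : ∀ x, ∃ d, x ∈ U d) {a b : ℝ}
    (hab : a < b) :
    ∃ τ > (0 : ℝ), ∀ (L : ℕ) (E : Finset (List ι)), IsBlockCode E L a →
      ∃ Q, IsBlockCode Q L b ∧ shadowed T U E (τ * L) ⊆ shadowed T U Q 0 := by
  classical
  have _ := Fintype.ofFinite ι
  obtain ⟨σ, hσ, hball⟩ := exists_card_hammingBall_le_exp (ι := ι) (sub_pos.2 hab)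
  refine ⟨σ, hσ, fun L E hE => ?_⟩
  have hfloor : (⌊σ * L⌋₊ : ℝ) ≤ σ * L := Nat.floor_le (by positivity)
  refine ⟨E.biUnion (hammingBall · ⌊σ * L⌋₊), ⟨fun q hq => ?_, ?_⟩, fun _ ⟨l, hl, hx⟩ => ?_⟩
  · obtain ⟨l, hl, hq⟩ := Finset.mem_biUnion.1 hq
    exact (length_of_mem_hammingBall hq).trans (hE.length_eq l hl)
  · calc ((E.biUnion (hammingBall · ⌊σ * L⌋₊)).card : ℝ)
        ≤ ∑ l ∈ E, ((hammingBall l ⌊σ * L⌋₊).card : ℝ) := by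
          exact_mod_cast Finset.card_biUnion_le
      _ ≤ ∑ _l ∈ E, Real.exp ((b - a) * L) := by
          refine Finset.sum_le_sum fun l hl => ?_
          have hlen := hE.length_eq l hl
          rw [← hlen] at hfloor ⊢
          exact hball l _ hfloor
      _ = E.card * Real.exp ((b - a) * L) := by rw [Finset.sum_const, nsmul_eq_mul]
      _ ≤ Real.exp (a * L) * Real.exp ((b - a) * L) := by
          gcongr
          exact hE.card_le
      _ = Real.exp (b * L) := by
          rw [← Real.exp_add]
          ring_nf
  · obtain ⟨q, hq, hxq⟩ := exists_mem_hammingBall_mismatches_eq_zero hcov (Nat.le_floor hx)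
    exact ⟨q, Finset.mem_biUnion.2 ⟨l, hl, hq⟩, (Nat.cast_eq_zero.2 hxq).le⟩

end ExactCodes

section EmpiricalMeasures

open scoped BoundedContinuousFunction

variable [MeasurableSpace X] {T : X → X}

/-- The uniform probability measure on the orbit segment `x, T x, …, T^n x`, which has `n + 1`
points so that it exists for every `n`. -/
noncomputable def empiricalMeasure (T : X → X) (n : ℕ) (x : X) : ProbabilityMeasure X :=
  ⟨((n + 1 : ℕ) : ENNReal)⁻¹ • ∑ k ∈ Finset.range (n + 1), Measure.dirac (T^[k] x), ⟨by
    simpa using ENNReal.inv_mul_cancel (Nat.cast_ne_zero.2 n.succ_ne_zero)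
      (ENNReal.natCast_ne_top (n + 1))⟩⟩

lemma integral_empiricalMeasure [MeasurableSingletonClass X] (n : ℕ) (x : X) (f : X → ℝ) :
    ∫ y, f y ∂(empiricalMeasure T n x : Measure X) = birkhoffAverage ℝ T f (n + 1) x := by
  rw [empiricalMeasure, ProbabilityMeasure.coe_mk, integral_smul_measure,
    integral_finsetSum_measure fun k _ => integrable_dirac enorm_lt_top, birkhoffAverage,
    birkhoffSum, ENNReal.toReal_inv, ENNReal.toReal_natCast]
  simp only [integral_dirac]

lemma empiricalMeasure_real_apply [MeasurableSingletonClass X] {S : Set X} (hS : MeasurableSet S)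
    (n : ℕ) (x : X) :
    (empiricalMeasure T n x : Measure X).real S = visits T S (n + 1) x / (n + 1 : ℕ) := by
  rw [← integral_indicator_one hS, integral_empiricalMeasure, birkhoffAverage_indicator_one]

lemma isOpen_setOf_measureReal_lt [TopologicalSpace X] [OpensMeasurableSpace X]
    [HasOuterApproxClosed X] {F : Set X} (hF : IsClosed F) (c : ℝ) :
    IsOpen {ν : ProbabilityMeasure X | (ν : Measure X).real F < c} := by
  refine isOpen_iff_eventually.2 fun ν hν => ?_
  have hlt : ∀ ν' : ProbabilityMeasure X,
      (ν' : Measure X) F < ENNReal.ofReal c ↔ (ν' : Measure X).real F < c := fun ν' =>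
    ENNReal.lt_ofReal_iff_toReal_lt (measure_ne_top _ _)
  have hlimsup : limsup (fun ν' : ProbabilityMeasure X => (ν' : Measure X) F) (𝓝 ν) <
      ENNReal.ofReal c :=
    (ProbabilityMeasure.limsup_measure_closed_le_of_tendsto tendsto_id hF).trans_lt ((hlt ν).2 hν)
  exact (eventually_lt_of_limsup_lt hlimsup).mono fun ν' => (hlt ν').1

variable [TopologicalSpace X] [BorelSpace X]

lemma measurePreserving_iff_map_eq (hT : Continuous T) {ν : ProbabilityMeasure X} :
    MeasurePreserving T (ν : Measure X) ν ↔ ν.map hT.aemeasurable = ν :=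
  ⟨fun h => Subtype.ext h.map_eq, fun h => ⟨hT.measurable, congrArg Subtype.val h⟩⟩

variable [HasOuterApproxClosed X]

lemma isClosed_setOf_measurePreserving (hT : Continuous T) :
    IsClosed {ν : ProbabilityMeasure X | MeasurePreserving T (ν : Measure X) ν} := by
  simp only [measurePreserving_iff_map_eq hT]
  exact isClosed_eq (ProbabilityMeasure.continuous_map hT) continuous_id

variable [T1Space X]

/-- Krylov–Bogolyubov. -/
lemma measurePreserving_of_tendsto_empiricalMeasure {κ : Type*} {l : Filter κ} [l.NeBot]
    (hT : Continuous T) {n : κ → ℕ} (hn : Tendsto n l atTop) {x : κ → X}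
    {ν : ProbabilityMeasure X} (h : Tendsto (fun i => empiricalMeasure T (n i) (x i)) l (𝓝 ν)) :
    MeasurePreserving T (ν : Measure X) ν := by
  refine ⟨hT.measurable, ext_of_forall_integral_eq_of_IsFiniteMeasure fun f => ?_⟩
  have hcont := fun g : X →ᵇ ℝ =>
    ((ProbabilityMeasure.continuous_integral_boundedContinuousFunction g).tendsto ν).comp h
  have hdist : ∀ i, dist (∫ y, f (T y) ∂(empiricalMeasure T (n i) (x i) : Measure X))
      (∫ y, f y ∂(empiricalMeasure T (n i) (x i) : Measure X)) ≤ 2 * ‖f‖ / (n i + 1 : ℕ) := by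
    intro i
    calc _ = dist (birkhoffAverage ℝ T f (n i + 1) (T (x i)))
          (birkhoffAverage ℝ T f (n i + 1) (x i)) := by
          rw [integral_empiricalMeasure, integral_empiricalMeasure]
          simp only [birkhoffAverage, birkhoffSum, ← Function.iterate_succ_apply,
            Function.iterate_succ_apply']
      _ = dist (f (T^[n i + 1] (x i))) (f (x i)) / (n i + 1 : ℕ) :=
          dist_birkhoffAverage_apply_birkhoffAverage ..
      _ ≤ 2 * ‖f‖ / (n i + 1 : ℕ) := by
          gcongr
          exact f.dist_le_two_norm _ _
  have hzero : Tendsto (fun i => 2 * ‖f‖ / (n i + 1 : ℕ)) l (𝓝 0) :=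
    tendsto_const_nhds.div_atTop (tendsto_natCast_atTop_atTop.comp
      ((tendsto_add_atTop_nat 1).comp hn))
  rw [integral_map hT.aemeasurable f.continuous.aestronglyMeasurable]
  exact dist_eq_zero.1 (tendsto_nhds_unique ((hcont (f.compContinuous ⟨T, hT⟩)).dist (hcont f))
    (squeeze_zero (fun _ => dist_nonneg) hdist hzero))

end EmpiricalMeasures

section UniformFrequencies

variable [MetricSpace X] [CompactSpace X] [MeasurableSpace X] [BorelSpace X] {T : X → X}

lemma eventually_forall_empiricalMeasure_mem (hT : Continuous T)
    {O : Set (ProbabilityMeasure X)} (hO : IsOpen O)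
    (h : ∀ ν : ProbabilityMeasure X, MeasurePreserving T (ν : Measure X) ν → ν ∈ O) :
    ∀ᶠ n in atTop, ∀ x, empiricalMeasure T n x ∈ O := by
  by_contra hcon
  simp only [eventually_atTop, not_exists, not_forall] at hcon
  choose n hn x hx using hcon
  set u := Ultrafilter.of (atTop : Filter ℕ)
  obtain ⟨ν, hνO, hν⟩ := hO.isClosed_compl.isCompact.ultrafilter_le_nhds
    (u.map fun i => empiricalMeasure T (n i) (x i))
    (le_principal_iff.2 (mem_map.2 (univ_mem' hx)))
  exact hνO (h ν (measurePreserving_of_tendsto_empiricalMeasure hT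
    ((tendsto_atTop_mono hn tendsto_id).mono_left (Ultrafilter.of_le _)) hν))

lemma nonempty_ergodicMeasures [Nonempty X] (hT : Continuous T) :
    (ergodicMeasures T).Nonempty := by
  obtain ⟨ν, hν⟩ : ∃ ν : ProbabilityMeasure X, MeasurePreserving T (ν : Measure X) ν := by
    by_contra! hcon
    obtain ⟨_, hn⟩ := (eventually_forall_empiricalMeasure_mem hT isOpen_empty
      fun ν hν => hcon ν hν).exists
    exact hn (Classical.arbitrary X)
  obtain ⟨y, hy⟩ := (ae_ergodic_condExpKernel_invariants hν).exists
  exact ⟨_, inferInstance, hy⟩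

lemma exists_finset_eventually_visits_le {α : Type*} (hT : Continuous T) {F : α → Set X}
    (hF : ∀ c, IsClosed (F c)) {e : ℝ} (h : ∀ ν : ProbabilityMeasure X,
      MeasurePreserving T (ν : Measure X) ν → ∃ c, (ν : Measure X).real (F c) < e) :
    ∃ J : Finset α, ∀ᶠ n : ℕ in atTop, ∀ x, ∃ c ∈ J, visits T (F c) n x ≤ e * n := by
  obtain ⟨J, hJ⟩ := (isClosed_setOf_measurePreserving hT).isCompact.elim_finite_subcover
    _ (fun c => isOpen_setOf_measureReal_lt (hF c) e) fun ν hν => mem_iUnion.2 (h ν hν)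
  refine ⟨J, ?_⟩
  rw [← map_add_atTop_eq_nat 1, eventually_map]
  filter_upwards [eventually_forall_empiricalMeasure_mem hT
    (isOpen_biUnion fun c _ => isOpen_setOf_measureReal_lt (hF c) e) fun ν hν => hJ hν] with n hn x
  obtain ⟨c, hc, hxc⟩ := mem_iUnion₂.1 (hn x)
  rw [mem_ofPred_eq, empiricalMeasure_real_apply (hF c).measurableSet,
    div_lt_iff₀ (by positivity)] at hxc
  exact ⟨c, hc, hxc.le⟩

variable {ι : Type*} {U : ι → Set X} {a θ : ℝ}

lemma eventually_exists_isBlockCode_shadowed_eq_univ (hT : Continuous T) (hU : ∀ i, IsOpen (U i))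
    (d : ι) (ha : 0 ≤ a) (hθ : 0 ≤ θ) (h : ∀ ν : ProbabilityMeasure X,
      MeasurePreserving T (ν : Measure X) ν → HasHammingCover T U (ν : Measure X) a θ)
    {b : ℝ} (hab : a < b) {τ : ℝ} (hθτ : θ < τ) :
    ∀ᶠ L : ℕ in atTop, ∃ E, IsBlockCode E L b ∧ shadowed T U E (τ * L) = univ := by
  obtain ⟨b', hab', hb'⟩ := exists_between hab
  obtain ⟨e, he, hτe⟩ : ∃ e > 0, θ + 3 * e = τ := ⟨(τ - θ) / 3, by linarith, by ring⟩
  obtain ⟨n₀, hn₀⟩ := (eventually_exists_isBlockCode_of_visits (T := T) (U := U) d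
    (ha.trans hab'.le) hb' (show 0 ≤ θ + e by positivity)
    (show θ + e + e < τ by linarith)).exists
  let C := {c : ℕ × Finset (List ι) // n₀ ≤ c.1 ∧ IsBlockCode c.2 c.1 b'}
  obtain ⟨J, hJ⟩ := exists_finset_eventually_visits_le hT (e := e)
    (F := fun c : C => (shadowed T U c.1.2 ((θ + e) * c.1.1))ᶜ)
    (fun c => (isOpen_shadowed hT hU _ _).isClosed_compl) fun ν hν => by
      obtain ⟨n, ⟨E, hE, hνE⟩, hn⟩ :=
        ((h ν hν b' hab' (θ + e) (by linarith) (e / 2) (by positivity)).and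
          (eventually_ge_atTop n₀)).exists
      exact ⟨⟨(n, E), hn, hE⟩, hνE.trans_lt (half_lt_self he)⟩
  filter_upwards [hn₀ (J.map (Function.Embedding.subtype _)) (by simp +contextual), hJ]
    with L ⟨E, hE, hEx⟩ hL
  refine ⟨E, hE, eq_univ_of_forall fun x => ?_⟩
  obtain ⟨c, hc, hcx⟩ := hL x
  exact hEx x ⟨c.1, Finset.mem_map_of_mem (Function.Embedding.subtype _) hc, hcx⟩

lemma eventually_exists_isBlockCode_shadowed_zero_eq_univ [Finite ι] (hT : Continuous T)
    (hU : ∀ i, IsOpen (U i)) (hcov : ∀ x, ∃ i, x ∈ U i) (d : ι) (ha : 0 ≤ a)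
    (h : ∀ ν : ProbabilityMeasure X,
      MeasurePreserving T (ν : Measure X) ν → HasHammingCover T U (ν : Measure X) a 0)
    {b : ℝ} (hab : a < b) :
    ∀ᶠ L : ℕ in atTop, ∃ E, IsBlockCode E L b ∧ shadowed T U E 0 = univ := by
  obtain ⟨b', hab', hb'⟩ := exists_between hab
  obtain ⟨τ, hτ, hexact⟩ := exists_isBlockCode_shadowed_zero (T := T) hcov hb'
  filter_upwards [eventually_exists_isBlockCode_shadowed_eq_univ hT hU d ha le_rfl h hab' hτ]
    with L ⟨E, hE, hEu⟩
  obtain ⟨Q, hQ, hsub⟩ := hexact L E hE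
  exact ⟨Q, hQ, univ_subset_iff.1 (hEu ▸ hsub)⟩

end UniformFrequencies

section ScalingLimits

lemma tendsto_log_one_div_nhdsGT_zero :
    Tendsto (fun ε : ℝ => Real.log (1 / ε)) (𝓝[>] 0) atTop := by
  simp only [one_div]
  exact Real.tendsto_log_atTop.comp tendsto_inv_nhdsGT_zero

lemma tendsto_const_mul_nhdsGT_zero {c : ℝ} (hc : 0 < c) :
    Tendsto (fun ε : ℝ => c * ε) (𝓝[>] 0) (𝓝[>] 0) := by
  refine tendsto_nhdsWithin_iff.2 ⟨tendsto_nhdsWithin_of_tendsto_nhds ?_,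
    eventually_mem_nhdsWithin.mono fun ε hε => mul_pos hc hε⟩
  exact (continuous_const_mul c).tendsto' 0 0 (mul_zero c)

/-- The rescaling costs only the bounded term `log c`, negligible against `log (1 / ε)`. -/
lemma liminf_div_log_le_of_rescale {f g : ℝ → EReal} {c : ℝ} (hc : 0 < c)
    (h : ∀ ε > 0, f (c * ε) ≤ g ε) :
    liminf (fun ε : ℝ => f ε / (Real.log (1 / ε) : ℝ)) (𝓝[>] 0) ≤
      liminf (fun ε : ℝ => g ε / (Real.log (1 / ε) : ℝ)) (𝓝[>] 0) := by
  have hpos : ∀ᶠ ε : ℝ in 𝓝[>] 0, 0 < ε := eventually_mem_nhdsWithin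
  have hlog := tendsto_log_one_div_nhdsGT_zero
  have hscale := tendsto_const_mul_nhdsGT_zero hc
  refine EReal.ge_of_forall_gt_iff_ge.1 fun s hs => le_liminf_of_le (by isBoundedDefault) ?_
  obtain ⟨t, hst, htf⟩ := EReal.lt_iff_exists_real_btwn.1 hs
  have hst : s < t := EReal.coe_lt_coe_iff.1 hst
  filter_upwards [hpos, hlog.eventually_gt_atTop 0,
    hscale.eventually (eventually_lt_of_lt_liminf htf),
    hscale.eventually (hlog.eventually_gt_atTop 0),
    hlog.eventually_ge_atTop (t * Real.log c / (t - s))] with ε hε hl hf hcl hlarge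
  rw [div_le_iff₀ (sub_pos.2 hst)] at hlarge
  have hlogc : Real.log (1 / (c * ε)) = Real.log (1 / ε) - Real.log c := by
    simp only [one_div, Real.log_inv, Real.log_mul hc.ne' hε.ne', neg_add']
    ring
  rw [EReal.le_div_iff_mul_le (EReal.coe_pos.2 hl) (EReal.coe_ne_top _)]
  calc (s : EReal) * (Real.log (1 / ε) : ℝ)
      ≤ t * (Real.log (1 / (c * ε)) : ℝ) := by
        rw [← EReal.coe_mul, ← EReal.coe_mul, EReal.coe_le_coe_iff, hlogc]
        linarith
    _ ≤ f (c * ε) :=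
        (EReal.le_div_iff_mul_le (EReal.coe_pos.2 hcl) (EReal.coe_ne_top _)).1 hf.le
    _ ≤ g ε := h ε hε

lemma log_natCast_div_le_iff {m n : ℕ} {a : ℝ} (ha : 0 ≤ a) (hn : 0 < n) :
    Real.log m / n ≤ a ↔ (m : ℝ) ≤ Real.exp (a * n) := by
  rw [div_le_iff₀ (Nat.cast_pos.2 hn)]
  rcases m.eq_zero_or_pos with rfl | hm
  · simpa using iff_of_true (mul_nonneg ha n.cast_nonneg) (Real.exp_pos _).le
  · exact Real.log_le_iff_le_exp (Nat.cast_pos.2 hm)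

lemma log_natCast_le_log_natCast {m n : ℕ} (h : m ≤ n) : Real.log m ≤ Real.log n := by
  rcases m.eq_zero_or_pos with rfl | hm
  · simpa using Real.log_natCast_nonneg n
  · exact Real.log_le_log (Nat.cast_pos.2 hm) (Nat.cast_le.2 h)

lemma log_natCast_div_natCast_nonneg (m n : ℕ) : (0 : EReal) ≤ (Real.log m / n : ℝ) :=
  EReal.coe_nonneg.2 (div_nonneg (Real.log_natCast_nonneg m) n.cast_nonneg)

end ScalingLimits

section BowenMetric

variable [MetricSpace X] {T : X → X} {n k : ℕ} {x y : X} {r : ℝ}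

lemma dynDist_le (hr : 0 ≤ r) (h : ∀ k < n, dist (T^[k] x) (T^[k] y) ≤ r) :
    dynDist T n x y ≤ r :=
  Real.iSup_le (fun k => Real.iSup_le (fun hk => h k (Finset.mem_range.1 hk)) hr) hr

lemma dist_iterate_le_dynDist (T : X → X) (x y : X) (hk : k < n) :
    dist (T^[k] x) (T^[k] y) ≤ dynDist T n x y := by
  have hsum : ∀ j, ⨆ _ : j ∈ Finset.range n, dist (T^[j] x) (T^[j] y) ≤
      ∑ i ∈ Finset.range n, dist (T^[i] x) (T^[i] y) := fun j =>
    Real.iSup_le (fun hj => Finset.single_le_sum (f := fun i => dist (T^[i] x) (T^[i] y))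
      (fun i _ => dist_nonneg) hj) (Finset.sum_nonneg fun i _ => dist_nonneg)
  refine le_trans (le_of_eq ?_) (le_ciSup ⟨_, forall_mem_range.2 hsum⟩ k)
  rw [ciSup_pos (Finset.mem_range.2 hk)]

lemma dynDist_nonneg : 0 ≤ dynDist T n x y :=
  Real.iSup_nonneg fun _ => Real.iSup_nonneg fun _ => dist_nonneg

lemma dynDist_comm (T : X → X) (n : ℕ) (x y : X) : dynDist T n x y = dynDist T n y x := by
  simp only [dynDist, dist_comm]

lemma dynDist_triangle (T : X → X) (n : ℕ) (x y z : X) :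
    dynDist T n x z ≤ dynDist T n x y + dynDist T n y z :=
  dynDist_le (add_nonneg dynDist_nonneg dynDist_nonneg) fun _ hk =>
    (dist_triangle _ _ _).trans
      (add_le_add (dist_iterate_le_dynDist T x y hk) (dist_iterate_le_dynDist T y z hk))

lemma dynBall_mem_nhds (hT : Continuous T) (n : ℕ) (x : X) (hr : 0 < r) :
    dynBall T n x r ∈ 𝓝 x := by
  have hclose : ∀ᶠ y in 𝓝 x, ∀ k ∈ Finset.range n, dist (T^[k] x) (T^[k] y) < r / 2 := by
    refine (eventually_all_finset _).2 fun k _ => ?_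
    have hcont : Continuous fun y => dist (T^[k] x) (T^[k] y) :=
      continuous_const.dist (hT.iterate k)
    exact hcont.tendsto' x 0 (dist_self _) |>.eventually_lt_const (half_pos hr)
  filter_upwards [hclose] with y hy
  exact (dynDist_le (half_pos hr).le fun k hk => (hy k (Finset.mem_range.2 hk)).le).trans_lt
    (half_lt_self hr)

lemma exists_finset_iUnion_dynBall_eq_univ [CompactSpace X] (hT : Continuous T) (n : ℕ)
    (hr : 0 < r) : ∃ F : Finset X, ⋃ x ∈ F, dynBall T n x r = univ := by
  obtain ⟨F, -, hF⟩ := isCompact_univ.elim_nhds_subcover (fun x => dynBall T n x r)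
    fun x _ => dynBall_mem_nhds hT n x hr
  exact ⟨F, univ_subset_iff.1 hF⟩

end BowenMetric

section SeparatedSets

variable [MetricSpace X] {T : X → X} {n : ℕ} {K : Set X} {r : ℝ}

/-- The `(n, r)`-separated finite sets counted by `sepNum`. -/
def IsDynSeparated (T : X → X) (n : ℕ) (r : ℝ) (E : Finset X) : Prop :=
  ∀ x ∈ E, ∀ y ∈ E, x ≠ y → r < dynDist T n x y

lemma sepNum_le {m : ℕ} (h : ∀ E : Finset X, ↑E ⊆ K → IsDynSeparated T n r E → E.card ≤ m) :
    sepNum T n K r ≤ m :=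
  csSup_le' fun _ ⟨E, hEK, hE, hcard⟩ => hcard ▸ h E hEK hE

lemma IsDynSeparated.card_le {E : Finset X} (hE : IsDynSeparated T n r E) {α : Type*}
    {Q : Finset α} {p : X → α} (hp : ∀ x ∈ E, p x ∈ Q)
    (h : ∀ x ∈ E, ∀ y ∈ E, p x = p y → dynDist T n x y ≤ r) : E.card ≤ Q.card := by
  refine Finset.card_le_card_of_injOn p hp fun x hx y hy hxy => ?_
  by_contra hne
  exact (hE x hx y hy hne).not_ge (h x hx y hy hxy)

lemma IsDynSeparated.insert [DecidableEq X] {E : Finset X} (hE : IsDynSeparated T n r E) {x : X}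
    (hx : ∀ y ∈ E, r < dynDist T n y x) : IsDynSeparated T n r (insert x E) := by
  intro y hy z hz hyz
  rcases Finset.mem_insert.1 hy with rfl | hyE <;> rcases Finset.mem_insert.1 hz with rfl | hzE
  · exact absurd rfl hyz
  · exact (hx z hzE).trans_eq (dynDist_comm T n z y)
  · exact hx y hyE
  · exact hE y hyE z hzE hyz

variable [CompactSpace X]

lemma exists_forall_isDynSeparated_card_le (hT : Continuous T) (n : ℕ) (hr : 0 < r) :
    ∃ m, ∀ E : Finset X, IsDynSeparated T n r E → E.card ≤ m := by
  obtain ⟨F, hF⟩ := exists_finset_iUnion_dynBall_eq_univ hT n (half_pos hr)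
  choose p hpF hp using fun x => mem_iUnion₂.1 (hF.ge (mem_univ x))
  refine ⟨F.card, fun E hE => hE.card_le (fun x _ => hpF x) fun x _ y _ hxy => ?_⟩
  have hpx : dynDist T n (p x) x < r / 2 := hp x
  have hpy : dynDist T n (p x) y < r / 2 := hxy ▸ hp y
  linarith [dynDist_triangle T n x (p x) y, dynDist_comm T n x (p x)]

lemma exists_isDynSeparated_card_eq_sepNum (hT : Continuous T) (n : ℕ) (K : Set X)
    (hr : 0 < r) :
    ∃ E : Finset X, E.card = sepNum T n K r ∧ ∀ x ∈ K, ∃ y ∈ E, dynDist T n y x ≤ r := by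
  classical
  obtain ⟨m, hm⟩ := exists_forall_isDynSeparated_card_le hT n hr
  let cards : Set ℕ := {m | ∃ E : Finset X, ↑E ⊆ K ∧ IsDynSeparated T n r E ∧ E.card = m}
  have hbdd : BddAbove cards := ⟨m, fun _ ⟨E, _, hE, hcard⟩ => hcard ▸ hm E hE⟩
  obtain ⟨E, hEK, hE, hcard⟩ : sepNum T n K r ∈ cards :=
    Nat.sSup_mem ⟨0, ∅, by simp, by simp [IsDynSeparated], rfl⟩ hbdd
  refine ⟨E, hcard, fun x hxK => ?_⟩
  by_contra! hfar
  have hxE : x ∉ E := fun hx =>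
    (hfar x hx).not_ge (dynDist_le hr.le fun k _ => (dist_self _).trans_le hr.le)
  have hle : (insert x E).card ≤ sepNum T n K r := le_csSup hbdd
    ⟨insert x E, by simp [Set.insert_subset_iff, hxK, hEK], hE.insert hfar, rfl⟩
  rw [Finset.card_insert_of_notMem hxE] at hle
  omega

end SeparatedSets

section KatokEntropy

variable [MetricSpace X] [MeasurableSpace X] {T : X → X} {μ : Measure X} {n : ℕ} {ε δ r : ℝ}

lemma katokEntLower_nonneg : 0 ≤ katokEntLower T μ ε δ :=
  le_liminf_of_le (by isBoundedDefault)
    (Eventually.of_forall fun _ => log_natCast_div_natCast_nonneg _ _)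

lemma katokNum_le_card [IsProbabilityMeasure μ] (hδ : δ < 1) {F : Finset X}
    (hF : ⋃ x ∈ F, dynBall T n x ε = univ) : katokNum T μ n ε δ ≤ F.card :=
  Nat.sInf_le ⟨F, by rwa [hF, measure_univ, ENNReal.ofReal_lt_one], rfl⟩

variable [CompactSpace X]

lemma exists_card_eq_katokNum [IsProbabilityMeasure μ] (hT : Continuous T) (n : ℕ)
    (hε : 0 < ε) (hδ : δ < 1) :
    ∃ F : Finset X, F.card = katokNum T μ n ε δ ∧
      ENNReal.ofReal δ < μ (⋃ x ∈ F, dynBall T n x ε) := by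
  obtain ⟨C, hC⟩ := exists_finset_iUnion_dynBall_eq_univ hT n hε
  let cards : Set ℕ := {m | ∃ F : Finset X,
    ENNReal.ofReal δ < μ (⋃ x ∈ F, dynBall T n x ε) ∧ F.card = m}
  obtain ⟨F, hF, hcard⟩ : katokNum T μ n ε δ ∈ cards :=
    Nat.sInf_mem ⟨C.card, C, by rwa [hC, measure_univ, ENNReal.ofReal_lt_one], rfl⟩
  exact ⟨F, hcard, hF⟩

lemma katokNum_le_sepNum [IsProbabilityMeasure μ] (hT : Continuous T) (n : ℕ) (hr : 0 < r)
    (hrε : r < ε) (hδ : δ < 1) : katokNum T μ n ε δ ≤ sepNum T n univ r := by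
  obtain ⟨E, hcard, hE⟩ := exists_isDynSeparated_card_eq_sepNum hT n univ hr
  rw [← hcard]
  refine katokNum_le_card hδ (eq_univ_of_forall fun x => mem_iUnion₂.2 ?_)
  obtain ⟨y, hy, hyx⟩ := hE x (mem_univ x)
  exact ⟨y, hy, hyx.trans_lt hrε⟩

lemma katokEntLower_le_sepEnt [IsProbabilityMeasure μ] (hT : Continuous T) (hr : 0 < r)
    (hrε : r < ε) (hδ : δ < 1) : katokEntLower T μ ε δ ≤ sepEnt T univ r := by
  refine (liminf_le_limsup (by isBoundedDefault) (by isBoundedDefault)).trans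
    (limsup_le_limsup (Eventually.of_forall fun n => ?_))
  exact EReal.coe_le_coe (div_le_div_of_nonneg_right
    (log_natCast_le_log_natCast (katokNum_le_sepNum hT n hr hrε hδ)) n.cast_nonneg)

lemma iSup_katokEntLower_le_sepEnt (hT : Continuous T) (hr : 0 < r) (hrε : r < ε)
    (hδ : δ < 1) :
    ⨆ μ ∈ ergodicMeasures T, katokEntLower T μ ε δ ≤ sepEnt T univ r :=
  iSup₂_le fun _ ⟨_, _⟩ => katokEntLower_le_sepEnt hT hr hrε hδ

end KatokEntropy

section Itineraries

variable [MetricSpace X] {T : X → X} {ι : Type*} {U : ι → Set X} {ε r : ℝ}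

lemma mismatches_itinerary_eq_zero {p : X → ι} (hp : ∀ x, Metric.ball x ε ⊆ U (p x)) {m : ℕ}
    {x y : X} (h : x ∈ dynBall T m y ε) :
    mismatches T U x ((List.range m).map fun k => p (T^[k] y)) = 0 := by
  refine mismatches_eq_zero_iff.2 fun k hk => ?_
  rw [List.length_map, List.length_range] at hk
  rw [List.getElem_map, List.getElem_range]
  refine hp _ (Metric.mem_ball'.2 ?_)
  exact (dist_iterate_le_dynDist T y x hk).trans_lt h

lemma sepNum_le_card_of_subset_shadowed (hr : 0 ≤ r)
    (hU : ∀ i, ∀ x ∈ U i, ∀ y ∈ U i, dist x y ≤ r) {Q : Finset (List ι)} {n : ℕ}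
    (hQ : ∀ l ∈ Q, l.length = n) {K : Set X} (hK : K ⊆ shadowed T U Q 0) :
    sepNum T n K r ≤ Q.card := by
  classical
  refine sepNum_le fun E hEK hE => ?_
  have hword : ∀ x ∈ K, ∃ l ∈ Q, mismatches T U x l = 0 := fun x hx => by
    obtain ⟨l, hl, hxl⟩ := hK hx
    exact ⟨l, hl, Nat.le_zero.1 (by exact_mod_cast hxl)⟩
  choose! q hqQ hq using hword
  refine hE.card_le (fun x hx => hqQ x (hEK hx)) fun x hx y hy hxy => dynDist_le hr fun k hk => ?_
  rw [← hQ _ (hqQ x (hEK hx))] at hk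
  exact hU _ _ (mismatches_eq_zero_iff.1 (hq x (hEK hx)) k hk) _
    (mismatches_eq_zero_iff.1 (hxy ▸ hq y (hEK hy)) k hk)

lemma sepEnt_le_of_eventually_subset_shadowed (hr : 0 ≤ r)
    (hU : ∀ i, ∀ x ∈ U i, ∀ y ∈ U i, dist x y ≤ r) {K : Set X} {b : ℝ} (hb : 0 ≤ b)
    (h : ∀ᶠ n : ℕ in atTop, ∃ Q, IsBlockCode Q n b ∧ K ⊆ shadowed T U Q 0) :
    sepEnt T K r ≤ b := by
  refine limsup_le_of_le (by isBoundedDefault) ?_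
  filter_upwards [h, eventually_gt_atTop 0] with n ⟨Q, hQ, hKQ⟩ hn
  rw [EReal.coe_le_coe_iff, log_natCast_div_le_iff hb hn]
  exact (Nat.cast_le.2 (sepNum_le_card_of_subset_shadowed hr hU hQ.length_eq hKQ)).trans hQ.card_le

variable [CompactSpace X] [MeasurableSpace X]

lemma frequently_exists_isBlockCode_of_katokEntLower_lt {μ : Measure X} [IsProbabilityMeasure μ]
    (hT : Continuous T) {p : X → ι} (hp : ∀ x, Metric.ball x ε ⊆ U (p x)) (hε : 0 < ε) {δ : ℝ}
    (hδ0 : 0 ≤ δ) (hδ1 : δ < 1) {a : ℝ} (h : katokEntLower T μ ε δ < a) :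
    ∃ᶠ m : ℕ in atTop, ∃ E, IsBlockCode E m a ∧ δ < μ.real (shadowed T U E 0) := by
  classical
  have ha : 0 ≤ a := EReal.coe_nonneg.1 (katokEntLower_nonneg.trans h.le)
  refine ((frequently_lt_of_liminf_lt (by isBoundedDefault) h).and_eventually
    (eventually_gt_atTop 0)).mono fun m ⟨hma, hm⟩ => ?_
  obtain ⟨F, hcard, hF⟩ := exists_card_eq_katokNum (μ := μ) hT m hε hδ1
  have hFa : (F.card : ℝ) ≤ Real.exp (a * m) := by
    rw [hcard, ← log_natCast_div_le_iff ha hm]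
    exact (EReal.coe_lt_coe_iff.1 hma).le
  let itinerary : X → List ι := fun y => (List.range m).map fun k => p (T^[k] y)
  refine ⟨F.image itinerary, ⟨?_, (Nat.cast_le.2 Finset.card_image_le).trans hFa⟩, ?_⟩
  · simp [itinerary]
  · rw [Measure.real, ← ENNReal.ofReal_lt_iff_lt_toReal hδ0 (measure_ne_top _ _)]
    refine hF.trans_le (measure_mono (iUnion₂_subset fun y hy x hx => ?_))
    exact ⟨itinerary y, Finset.mem_image_of_mem _ hy, by
      rw [mismatches_itinerary_eq_zero hp hx, Nat.cast_zero]⟩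

end Itineraries

section EntropyComparison

variable [MetricSpace X] [CompactSpace X] [MeasurableSpace X] [BorelSpace X] [Nonempty X]
  {T : X → X} {ε δ : ℝ}

lemma iSup_katokEntLower_nonneg (hT : Continuous T) :
    0 ≤ ⨆ μ ∈ ergodicMeasures T, katokEntLower T μ ε δ := by
  obtain ⟨μ, hμ⟩ := nonempty_ergodicMeasures hT
  exact le_iSup₂_of_le μ hμ katokEntLower_nonneg

lemma sepEnt_four_mul_le_iSup_katokEntLower (hT : Continuous T) (hε : 0 < ε) (hδ0 : 0 < δ)
    (hδ1 : δ < 1) :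
    sepEnt T univ (4 * ε) ≤ ⨆ μ ∈ ergodicMeasures T, katokEntLower T μ ε δ := by
  refine EReal.le_of_forall_lt_iff_le.1 fun b hb => ?_
  obtain ⟨a, ha, hab⟩ := EReal.lt_iff_exists_real_btwn.1 hb
  have ha0 : 0 ≤ a := EReal.coe_nonneg.1 ((iSup_katokEntLower_nonneg hT).trans ha.le)
  have hab : a < b := EReal.coe_lt_coe_iff.1 hab
  obtain ⟨D, hD⟩ := isCompact_univ.elim_nhds_subcover (fun x : X => Metric.ball x ε)
    fun x _ => Metric.ball_mem_nhds x hε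
  choose p hpD hp using fun x => mem_iUnion₂.1 (hD.2 (mem_univ x))
  let U : D → Set X := fun d => Metric.ball d.1 (2 * ε)
  have hU : ∀ d, IsOpen (U d) := fun _ => Metric.isOpen_ball
  have hpU : ∀ x, Metric.ball x ε ⊆ U ⟨p x, hpD x⟩ := fun x =>
    Metric.ball_subset_ball' (by linarith [Metric.mem_ball.1 (hp x)])
  have hUdist : ∀ d, ∀ x ∈ U d, ∀ y ∈ U d, dist x y ≤ 4 * ε := fun d x hx y hy => by
    linarith [dist_triangle_right x y d.1, Metric.mem_ball.1 hx, Metric.mem_ball.1 hy]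
  let d₀ : D := ⟨p (Classical.arbitrary X), hpD _⟩
  have hergodic : ∀ ν ∈ ergodicMeasures T, HasHammingCover T U ν a 0 := fun ν hν => by
    have := hν.1
    exact hasHammingCover_zero_of_ergodic hT hU d₀ hν.2 ha0 hδ0 hδ1
      (frequently_exists_isBlockCode_of_katokEntLower_lt hT hpU hε hδ0.le hδ1
        ((le_iSup₂ (f := fun μ (_ : μ ∈ ergodicMeasures T) => katokEntLower T μ ε δ)
          ν hν).trans_lt ha))
  refine sepEnt_le_of_eventually_subset_shadowed (by positivity) hUdist (ha0.trans hab.le)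
    ((eventually_exists_isBlockCode_shadowed_zero_eq_univ hT hU
      (fun x => ⟨_, hpU x (Metric.mem_ball_self hε)⟩) d₀ ha0 (fun ν hν => ?_) hab).mono
      fun n ⟨Q, hQ, hQu⟩ => ⟨Q, hQ, hQu.ge⟩)
  exact hasHammingCover_of_forall_ergodic hT hU d₀ ha0 le_rfl hergodic hν

theorem lower_mdim_eq_liminf_lowerKatok_general (hT : Continuous T) (hδ : δ ∈ Ioo (0 : ℝ) 1) :
    mdimLower T = liminf (fun ε : ℝ =>
      (⨆ μ ∈ ergodicMeasures T, katokEntLower T μ ε δ) / ((Real.log (1 / ε) : ℝ) : EReal))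
      (𝓝[>] (0 : ℝ)) :=
  le_antisymm
    (liminf_div_log_le_of_rescale four_pos
      fun _ hε => sepEnt_four_mul_le_iSup_katokEntLower hT hε hδ.1 hδ.2)
    (liminf_div_log_le_of_rescale two_pos
      fun _ hε => iSup_katokEntLower_le_sepEnt hT hε (lt_two_mul_self hε) hδ.2)

end EntropyComparison

section Theorems

variable [MetricSpace X] [CompactSpace X] [Nonempty X] [MeasurableSpace X] [BorelSpace X]

/-- Variational principle for the lower metric mean dimension in terms of the lower
Katok entropy (Proposition 5.2, second part). -/
theorem lower_mdim_eq_liminf_lowerKatok (T : X → X) (hT : IsHomeomorph T)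
    (δ : ℝ) (hδ : δ ∈ Set.Ioo (0:ℝ) 1) :
    mdimLower T = liminf (fun ε : ℝ =>
      (⨆ μ ∈ ergodicMeasures T, katokEntLower T μ ε δ)
        / ((Real.log (1 / ε) : ℝ) : EReal)) (𝓝[>] (0:ℝ)) :=
  lower_mdim_eq_liminf_lowerKatok_general hT.continuous hδ

end Theorems
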